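/- Let f, g : (ℝⁿ,0) → (ℝᵐ,0) be real analytic map germs (defined and real analytic on a neighborhood of 0, with f(0)=g(0)=0). If there exists a C^∞ map τ defined near 0 in ℝⁿ with τ(0)=0 and invertible derivative at 0 such that f∘τ = g on a neighborhood of 0, then there exists a map σ defined near 0 in ℝⁿ, real analytic at 0, with σ(0)=0 and invertible derivative at 0, such that f∘σ = g on a neighborhood of 0. That is, two C^∞ R equivalent analytic map germs are analytically R equivalent. -/

import Mathlib

open scoped Topology

namespace ART
open MvPowerSeries Finsupp
open scoped ENNReal NNReal

abbrev PS (σ : Type) := MvPowerSeries σ ℝ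

variable {σ τ ι κ : Type}

noncomputable def mono (r : σ → ℝ≥0) (e : σ →₀ ℕ) : ℝ≥0∞ := ((e.prod fun i k => r i ^ k : ℝ≥0) : ℝ≥0∞)

lemma mono_add (r : σ → ℝ≥0) (e e' : σ →₀ ℕ) : mono r (e + e') = mono r e * mono r e' := by
  classical
  unfold mono
  rw [Finsupp.prod_add_index' (by simp) (by intros; rw [pow_add])]
  push_cast; rfl

lemma mono_zero (r : σ → ℝ≥0) : mono r 0 = 1 := by simp [mono]

lemma mono_single (r : σ → ℝ≥0) (i : σ) (k : ℕ) : mono r (single i k) = (r i : ℝ≥0∞) ^ k := by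
  simp [mono]

lemma mono_mono {r s : σ → ℝ≥0} (h : ∀ i, r i ≤ s i) (e : σ →₀ ℕ) : mono r e ≤ mono s e := by
  unfold mono
  gcongr
  unfold Finsupp.prod
  exact Finset.prod_le_prod' fun i _ => pow_le_pow_left' (h i) _

lemma mono_ne_top (r : σ → ℝ≥0) (e : σ →₀ ℕ) : mono r e ≠ ⊤ := ENNReal.coe_ne_top

lemma mono_ne_zero {r : σ → ℝ≥0} (h : ∀ i, 0 < r i) (e : σ →₀ ℕ) : mono r e ≠ 0 := by
  unfold mono
  rw [ENNReal.coe_ne_zero]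
  exact Finset.prod_ne_zero_iff.2 fun i _ => (pow_pos (h i) _).ne'

noncomputable def nrm (r : σ → ℝ≥0) (F : PS σ) : ℝ≥0∞ := ∑' e, ‖coeff e F‖ₑ * mono r e

lemma nrm_mono {r s : σ → ℝ≥0} (h : ∀ i, r i ≤ s i) (F : PS σ) : nrm r F ≤ nrm s F :=
  ENNReal.tsum_le_tsum fun e => mul_le_mul_right (mono_mono h e) _

lemma nrm_zero (r : σ → ℝ≥0) : nrm r (0 : PS σ) = 0 := by simp [nrm]

lemma nrm_add_le (r : σ → ℝ≥0) (F G : PS σ) : nrm r (F + G) ≤ nrm r F + nrm r G := by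
  unfold nrm
  rw [← ENNReal.tsum_add]
  refine ENNReal.tsum_le_tsum fun e => ?_
  rw [← add_mul, map_add]
  gcongr
  exact enorm_add_le _ _

lemma nrm_neg (r : σ → ℝ≥0) (F : PS σ) : nrm r (-F) = nrm r F := by
  simp [nrm]

lemma nrm_mul_le (r : σ → ℝ≥0) (F G : PS σ) : nrm r (F * G) ≤ nrm r F * nrm r G := by
  classical
  unfold nrm
  rw [← ENNReal.tsum_mul_right]
  simp_rw [← ENNReal.tsum_mul_left]
  rw [← ENNReal.tsum_prod (f := fun a b => ‖coeff a F‖ₑ * mono r a * (‖coeff b G‖ₑ * mono r b)),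
    ← Finset.HasAntidiagonal.sigmaAntidiagonalEquivProd.tsum_eq, ENNReal.tsum_sigma']
  refine ENNReal.tsum_le_tsum fun e => ?_
  rw [tsum_fintype, coeff_mul]
  simp only [Finset.HasAntidiagonal.sigmaAntidiagonalEquivProd_apply, Finset.univ_eq_attach]
  rw [Finset.sum_attach (Finset.HasAntidiagonal.antidiagonal e)
    (fun x => ‖coeff x.1 F‖ₑ * mono r x.1 * (‖coeff x.2 G‖ₑ * mono r x.2))]
  refine (mul_le_mul_left (enorm_sum_le _ _) _).trans ?_
  rw [Finset.sum_mul]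
  refine Finset.sum_le_sum fun x hx => ?_
  rw [← Finset.HasAntidiagonal.mem_antidiagonal.1 hx, mono_add, enorm_mul]
  exact le_of_eq (by ring)

lemma nrm_monomial (r : σ → ℝ≥0) (e : σ →₀ ℕ) (a : ℝ) :
    nrm r (monomial e a) = ‖a‖ₑ * mono r e := by
  classical
  unfold nrm
  rw [tsum_eq_single e]
  · simp
  · intro b hb; rw [coeff_monomial_ne hb]; simp

lemma nrm_C (r : σ → ℝ≥0) (a : ℝ) : nrm r (C a : PS σ) = ‖a‖ₑ := by
  rw [← monomial_zero_eq_C_apply, nrm_monomial, mono_zero, mul_one]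

lemma nrm_one (r : σ → ℝ≥0) : nrm r (1 : PS σ) = 1 := by
  rw [← map_one C, nrm_C]; simp

lemma nrm_X (r : σ → ℝ≥0) (i : σ) : nrm r (X i : PS σ) = r i := by
  rw [X, nrm_monomial, mono_single]; simp

lemma nrm_pow_le (r : σ → ℝ≥0) (F : PS σ) (k : ℕ) : nrm r (F ^ k) ≤ nrm r F ^ k := by
  induction k with
  | zero => simp [nrm_one]
  | succ k ih =>
    rw [pow_succ, pow_succ]
    exact (nrm_mul_le _ _ _).trans (mul_le_mul_left ih _)

lemma nrm_prod_le (r : σ → ℝ≥0) (s : Finset ι) (F : ι → PS σ) :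
    nrm r (∏ i ∈ s, F i) ≤ ∏ i ∈ s, nrm r (F i) := by
  classical
  induction s using Finset.induction_on with
  | empty => simp [nrm_one]
  | insert a s ha ih =>
    rw [Finset.prod_insert ha, Finset.prod_insert ha]
    exact (nrm_mul_le _ _ _).trans (mul_le_mul_right ih _)

lemma nrm_subst_le {r : τ → ℝ≥0} {s : σ → ℝ≥0} {a : σ → PS τ} (ha : HasSubst a)
    (h : ∀ i, nrm r (a i) ≤ s i) (F : PS σ) : nrm r (subst a F) ≤ nrm s F := by
  unfold nrm
  calc ∑' e, ‖coeff e (subst a F)‖ₑ * mono r e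
      ≤ ∑' e, ∑' d, ‖coeff d F‖ₑ * (‖coeff e (d.prod fun s e => (a s) ^ e)‖ₑ * mono r e) := by
        refine ENNReal.tsum_le_tsum fun e => ?_
        rw [coeff_subst ha, finsum_eq_sum _ (coeff_subst_finite ha F e)]
        refine (mul_le_mul_left (enorm_sum_le _ _) _).trans ?_
        rw [Finset.sum_mul]
        refine le_trans (le_of_eq ?_) (ENNReal.sum_le_tsum (coeff_subst_finite ha F e).toFinset)
        refine Finset.sum_congr rfl fun d _ => ?_
        rw [smul_eq_mul, enorm_mul, mul_assoc]
    _ = ∑' d, ‖coeff d F‖ₑ * nrm r (d.prod fun s e => (a s) ^ e) := by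
        rw [ENNReal.tsum_comm]
        simp_rw [ENNReal.tsum_mul_left]
        rfl
    _ ≤ _ := by
        refine ENNReal.tsum_le_tsum fun d => ?_
        gcongr
        refine (nrm_prod_le _ _ _).trans ?_
        unfold mono Finsupp.prod
        push_cast
        exact Finset.prod_le_prod' fun i _ => (nrm_pow_le _ _ _).trans (pow_le_pow_left' (h i) _)

/-- Ideal of series of weighted order at least `k`. -/
noncomputable def Mk (w : σ → ℕ) (k : ℕ) : Ideal (PS σ) where
  carrier := {F | ∀ e, weight w e < k → coeff e F = 0}
  zero_mem' := by intro e _; simp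
  add_mem' := by
    intro a b ha hb e he
    rw [map_add, ha e he, hb e he, add_zero]
  smul_mem' := by
    classical
    intro c x hx e he
    rw [smul_eq_mul, coeff_mul]
    refine Finset.sum_eq_zero fun p hp => ?_
    rw [hx p.2, mul_zero]
    have := congrArg (weight w) (Finset.HasAntidiagonal.mem_antidiagonal.1 hp)
    rw [map_add] at this
    omega

lemma mem_Mk {w : σ → ℕ} {k : ℕ} {F : PS σ} :
    F ∈ Mk w k ↔ ∀ e, weight w e < k → coeff e F = 0 := Iff.rfl

lemma Mk_zero (w : σ → ℕ) (F : PS σ) : F ∈ Mk w 0 := by intro e he; omega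

lemma Mk_mul {w : σ → ℕ} {k l : ℕ} {F G : PS σ} (hF : F ∈ Mk w k) (hG : G ∈ Mk w l) :
    F * G ∈ Mk w (k + l) := by
  classical
  intro e he
  rw [coeff_mul]
  refine Finset.sum_eq_zero fun p hp => ?_
  have := congrArg (weight w) (Finset.HasAntidiagonal.mem_antidiagonal.1 hp)
  rw [map_add] at this
  by_cases h : weight w p.1 < k
  · rw [hF _ h, zero_mul]
  · rw [hG _ (by omega), mul_zero]

lemma Mk_anti {w : σ → ℕ} {k l : ℕ} (h : k ≤ l) {F : PS σ} (hF : F ∈ Mk w l) : F ∈ Mk w k :=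
  fun e he => hF e (by omega)

lemma Mk_all {w : σ → ℕ} {F : PS σ} (h : ∀ k, F ∈ Mk w k) : F = 0 := by
  ext e; exact h (weight w e + 1) e (by omega)

lemma nrm_le_of_approx {r : σ → ℝ≥0} {w : σ → ℕ} {F : PS σ} {M : ℝ≥0∞}
    (h : ∀ k, ∃ G, nrm r G ≤ M ∧ F - G ∈ Mk w k) : nrm r F ≤ M := by
  unfold nrm
  rw [ENNReal.tsum_eq_iSup_sum]
  refine iSup_le fun s => ?_
  obtain ⟨G, hG, hFG⟩ := h (s.sup (weight w) + 1)
  refine le_trans (le_of_eq ?_) ((ENNReal.sum_le_tsum s).trans hG)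
  refine Finset.sum_congr rfl fun e he => ?_
  have := hFG e (Nat.lt_succ_of_le (Finset.le_sup he))
  rw [map_sub, sub_eq_zero] at this
  rw [this]

lemma nrm_scale {r r' : σ → ℝ≥0} {ε : ℝ≥0} (hr : ∀ i, r' i ≤ r i) {w : σ → ℕ}
    (hw : ∀ i, w i ≠ 0 → r' i ≤ ε * r i) {F : PS σ} (hF : F ∈ Mk w 1) :
    nrm r' F ≤ ε * nrm r F := by
  classical
  unfold nrm
  rw [← ENNReal.tsum_mul_left]
  refine ENNReal.tsum_le_tsum fun e => ?_
  by_cases he : weight w e < 1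
  · rw [hF e he]; simp
  · have : ∃ i, e i ≠ 0 ∧ w i ≠ 0 := by
      by_contra! hc
      apply he
      rw [weight_apply, Finsupp.sum]
      rw [Finset.sum_eq_zero]; · simp
      intro i hi
      rw [hc i (by simpa using hi)]; simp
    obtain ⟨i, hi, hwi⟩ := this
    obtain ⟨e', rfl⟩ : ∃ e', e = single i 1 + e' :=
      ⟨e - single i 1, (add_tsub_cancel_of_le (by rw [Finsupp.single_le_iff]; omega)).symm⟩
    rw [mono_add, mono_add, mono_single, mono_single, pow_one, pow_one]
    calc _ ≤ ‖coeff (single i 1 + e') F‖ₑ * (((ε * r i : ℝ≥0) : ℝ≥0∞) * mono r e') := by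
          gcongr
          · exact hw i hwi
          · exact mono_mono hr _
      _ = _ := by push_cast; ring

/-- convergent power series -/
def Conv (F : PS σ) : Prop := ∃ ρ : ℝ≥0, 0 < ρ ∧ nrm (fun _ => ρ) F < ⊤

lemma Conv.small {F : PS σ} (h : Conv F) : ∃ ρ : ℝ≥0, 0 < ρ ∧ ∀ r : σ → ℝ≥0, (∀ i, r i ≤ ρ) → nrm r F < ⊤ := by
  obtain ⟨ρ, h0, h1⟩ := h
  exact ⟨ρ, h0, fun r hr => (nrm_mono hr F).trans_lt h1⟩

lemma Conv.of_nrm [Finite σ] {F : PS σ} {r : σ → ℝ≥0} (hr : ∀ i, 0 < r i) (h : nrm r F < ⊤) : Conv F := by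
  cases nonempty_fintype σ
  rcases isEmpty_or_nonempty σ with he | he
  · exact ⟨1, one_pos, (nrm_mono (fun i => he.elim i) F).trans_lt h⟩
  · obtain ⟨i, hi⟩ := Finite.exists_min r
    exact ⟨r i, hr i, (nrm_mono hi F).trans_lt h⟩

lemma Conv.zero : Conv (0 : PS σ) := ⟨1, one_pos, by simp [nrm_zero]⟩
lemma Conv.C (a : ℝ) : Conv (C a : PS σ) := ⟨1, one_pos, by simp [nrm_C]⟩
lemma Conv.one : Conv (1 : PS σ) := ⟨1, one_pos, by simp [nrm_one]⟩
lemma Conv.X (i : σ) : Conv (X i : PS σ) := ⟨1, one_pos, by simp [nrm_X]⟩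

lemma Conv.add {F G : PS σ} (hF : Conv F) (hG : Conv G) : Conv (F + G) := by
  obtain ⟨a, ha, h1⟩ := hF.small
  obtain ⟨b, hb, h2⟩ := hG.small
  exact ⟨min a b, lt_min ha hb, (nrm_add_le _ _ _).trans_lt
    (ENNReal.add_lt_top.2 ⟨h1 _ fun _ => min_le_left _ _, h2 _ fun _ => min_le_right _ _⟩)⟩

lemma Conv.mul {F G : PS σ} (hF : Conv F) (hG : Conv G) : Conv (F * G) := by
  obtain ⟨a, ha, h1⟩ := hF.small
  obtain ⟨b, hb, h2⟩ := hG.small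
  exact ⟨min a b, lt_min ha hb, (nrm_mul_le _ _ _).trans_lt
    (ENNReal.mul_lt_top (h1 _ fun _ => min_le_left _ _) (h2 _ fun _ => min_le_right _ _))⟩

lemma Conv.neg {F : PS σ} (hF : Conv F) : Conv (-F) := by
  obtain ⟨a, ha, h1⟩ := hF
  exact ⟨a, ha, by rwa [nrm_neg]⟩

lemma Conv.sub {F G : PS σ} (hF : Conv F) (hG : Conv G) : Conv (F - G) := by
  rw [sub_eq_add_neg]; exact hF.add hG.neg

/-- the subring of convergent series -/
def CR (σ : Type) : Subring (PS σ) where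
  carrier := {F | Conv F}
  zero_mem' := Conv.zero
  one_mem' := Conv.one
  add_mem' := Conv.add
  mul_mem' := Conv.mul
  neg_mem' := Conv.neg

lemma Conv.pow {F : PS σ} (hF : Conv F) (k : ℕ) : Conv (F ^ k) := (CR σ).pow_mem hF k
lemma Conv.sum {s : Finset ι} {F : ι → PS σ} (h : ∀ i ∈ s, Conv (F i)) : Conv (∑ i ∈ s, F i) :=
  (CR σ).sum_mem h
lemma Conv.prod {s : Finset ι} {F : ι → PS σ} (h : ∀ i ∈ s, Conv (F i)) : Conv (∏ i ∈ s, F i) :=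
  (CR σ).prod_mem h
lemma Conv.det {n : Type} [Fintype n] [DecidableEq n] {M : Matrix n n (PS σ)} (h : ∀ i j, Conv (M i j)) :
    Conv M.det := by
  rw [Matrix.det_apply]
  refine Conv.sum fun g _ => ?_
  exact (CR σ).zsmul_mem (Conv.prod fun i _ => h _ _) _

lemma Conv.exists_common [Finite ι] {F : ι → PS σ} (h : ∀ i, Conv (F i)) :
    ∃ ρ : ℝ≥0, 0 < ρ ∧ ∀ i, ∀ r : σ → ℝ≥0, (∀ i, r i ≤ ρ) → nrm r (F i) < ⊤ := by
  cases nonempty_fintype ι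
  choose ρ h0 h1 using fun i => (h i).small
  rcases isEmpty_or_nonempty ι with he | he
  · exact ⟨1, one_pos, fun i => he.elim i⟩
  · obtain ⟨i, hi⟩ := Finite.exists_min ρ
    exact ⟨ρ i, h0 i, fun j r hr => h1 j r fun k => (hr k).trans (hi j)⟩

lemma mem_Mk_one_one {F : PS σ} : F ∈ Mk (fun _ => 1) 1 ↔ constantCoeff F = 0 := by
  rw [mem_Mk, ← coeff_zero_eq_constantCoeff_apply]
  constructor
  · intro h; exact h 0 (by simp)
  · intro h e he
    have : e = 0 := by
      have : weight (fun _ : σ => 1) e = degree e := by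
        rw [degree_eq_weight_one]
      rw [this] at he
      rw [← degree_eq_zero_iff]; omega
    rw [this, h]

lemma exists_small_radius [Finite ι] {F : ι → PS σ} (h : ∀ i, Conv (F i)) (h0 : ∀ i, constantCoeff (F i) = 0)
    {s : ℝ≥0} (hs : 0 < s) : ∃ ρ : ℝ≥0, 0 < ρ ∧ ∀ i, nrm (fun _ => ρ) (F i) ≤ s := by
  cases nonempty_fintype ι
  obtain ⟨ρ, hρ, h1⟩ := Conv.exists_common h
  have h1' : ∀ i, nrm (fun _ => ρ) (F i) < ⊤ := fun i => h1 i _ fun _ => le_rfl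
  set M : ℝ≥0 := ∑ i, (nrm (fun _ => ρ) (F i)).toNNReal with hM
  set ε : ℝ≥0 := min 1 (s / (M + 1)) with hε
  have hε0 : 0 < ε := lt_min one_pos (by positivity)
  refine ⟨ε * ρ, by positivity, fun i => ?_⟩
  refine (nrm_scale (r := fun _ => ρ) (w := fun _ => 1) (ε := ε) ?_ ?_ (mem_Mk_one_one.2 (h0 i))).trans ?_
  · intro i; exact mul_le_of_le_one_left' (min_le_left _ _)
  · intro i _; exact le_rfl
  · have : (nrm (fun _ => ρ) (F i)).toNNReal ≤ M :=
      Finset.single_le_sum (f := fun i => (nrm (fun _ => ρ) (F i)).toNNReal) (fun _ _ => zero_le) (Finset.mem_univ i)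
    rw [← ENNReal.coe_toNNReal (h1' i).ne, ← ENNReal.coe_mul, ENNReal.coe_le_coe]
    calc ε * _ ≤ (s / (M + 1)) * (M + 1) := mul_le_mul' (min_le_right _ _) (this.trans (by simp))
      _ = s := div_mul_cancel₀ _ (by positivity)

lemma hasS [Finite σ] {a : σ → PS τ} (h : ∀ i, constantCoeff (a i) = 0) : HasSubst a :=
  hasSubst_of_constantCoeff_zero h

lemma Conv.subst [Finite σ] [Finite τ] {a : σ → PS τ} (h0 : ∀ i, constantCoeff (a i) = 0) (ha : ∀ i, Conv (a i))
    {F : PS σ} (hF : Conv F) : Conv (subst a F) := by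
  obtain ⟨s, hs, h1⟩ := hF
  obtain ⟨ρ, hρ, h2⟩ := exists_small_radius ha h0 hs
  exact ⟨ρ, hρ, (nrm_subst_le (hasS h0) h2 F).trans_lt h1⟩

lemma Conv.pderiv [Finite σ] {F : PS σ} (hF : Conv F) (i : σ) : Conv (pderiv ℝ i F) := by
  obtain ⟨s, hs, h1⟩ := hF
  refine ⟨s / 2, by positivity, ?_⟩
  have h2 : ∀ e : σ →₀ ℕ, ‖coeff e (MvPowerSeries.pderiv ℝ i F)‖ₑ * mono (fun _ => s / 2) e
      ≤ (2 / s : ℝ≥0) * (‖coeff (e + single i 1) F‖ₑ * mono (fun _ => s) (e + single i 1)) := by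
    intro e
    rw [coeff_pderiv, enorm_mul]
    have h3 : (((e + single i 1 : σ →₀ ℕ) i : ℕ) : ℝ≥0∞) * mono (fun _ => s/2) (e + single i 1) ≤ mono (fun _ => s) (e + single i 1) := by
      set e' := e + single i 1
      have : mono (fun _ => s) e' = 2 ^ (degree e') * mono (fun _ => s/2) e' := by
        simp only [mono, Finsupp.prod, Finset.prod_pow_eq_pow_sum, degree_apply]
        rw [ENNReal.coe_pow, ENNReal.coe_pow]
        have : (s : ℝ≥0∞) = 2 * ((s/2 : ℝ≥0) : ℝ≥0∞) := by
          rw [← ENNReal.coe_ofNat, ← ENNReal.coe_mul]; congr 1; field_simp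
        conv_lhs => rw [this]
        rw [mul_pow]
      rw [this]
      gcongr
      have h4 : e' i ≤ degree e' := le_degree i e'
      have h5 : degree e' < 2 ^ degree e' := Nat.lt_two_pow_self
      exact_mod_cast h4.trans h5.le
    have h6 : ‖((e i : ℝ) + 1)‖ₑ = (((e + single i 1 : σ →₀ ℕ) i : ℕ) : ℝ≥0∞) := by
      have : ((e i : ℝ) + 1) = ((e i + 1 : ℕ) : ℝ) := by push_cast; ring
      rw [this, Real.enorm_natCast]
      simp
    rw [h6]
    have h7 : mono (fun _ => s/2) e = (2 / s : ℝ≥0) * mono (fun _ => s/2) (e + single i 1) := by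
      rw [mono_add, mono_single, pow_one, mul_comm, mul_assoc, ← ENNReal.coe_mul]
      have : s / 2 * (2 / s) = 1 := by field_simp
      rw [this]; simp
    rw [h7]
    calc _ = (2 / s : ℝ≥0) * (‖coeff (e + single i 1) F‖ₑ * ((((e + single i 1 : σ →₀ ℕ) i : ℕ) : ℝ≥0∞) * mono (fun _ => s/2) (e + single i 1))) := by ring
      _ ≤ _ := by gcongr
  refine (ENNReal.tsum_le_tsum h2).trans_lt ?_
  rw [ENNReal.tsum_mul_left]
  refine ENNReal.mul_lt_top ENNReal.coe_lt_top (lt_of_le_of_lt ?_ h1)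
  exact ENNReal.tsum_comp_le_tsum_of_injective (add_left_injective (single i 1))
    (fun e => ‖coeff e F‖ₑ * mono (fun _ => s) e)

end ART


namespace ART
open MvPowerSeries Finsupp
open scoped ENNReal NNReal

variable {σ τ ι κ : Type}

lemma fixpt (w : σ → ℕ) (Φ : (κ → PS σ) → (κ → PS σ)) (P : (κ → PS σ) → Prop) (h0 : P 0)
    (hP : ∀ z, P z → P (Φ z))
    (hc : ∀ z, (∀ k, ∃ z', P z' ∧ ∀ i, z i - z' i ∈ Mk w k) → P z)
    (hctr : ∀ k z z', P z → P z' → (∀ i, z i - z' i ∈ Mk w k) → ∀ i, Φ z i - Φ z' i ∈ Mk w (k + 1)) :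
    ∃ z, P z ∧ Φ z = z := by
  set Z : ℕ → κ → PS σ := fun n => Φ^[n] 0 with hZ
  have hZs : ∀ n, Z (n + 1) = Φ (Z n) := fun n => Function.iterate_succ_apply' _ _ _
  have hPZ : ∀ n, P (Z n) := by
    intro n
    induction n with
    | zero => exact h0
    | succ n ih => rw [hZs]; exact hP _ ih
  have h1 : ∀ n i, Z (n + 1) i - Z n i ∈ Mk w n := by
    intro n
    induction n with
    | zero => intro i; exact Mk_zero _ _
    | succ n ih =>
      intro i
      have := hctr n _ _ (hPZ (n+1)) (hPZ n) ih i
      rwa [← hZs, ← hZs] at this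
  have h2 : ∀ n m i, Z (n + m) i - Z n i ∈ Mk w n := by
    intro n m i
    induction m with
    | zero => simp
    | succ m ih =>
      have := (Mk w n).add_mem (Mk_anti (by omega) (h1 (n + m) i)) ih
      rwa [sub_add_sub_cancel] at this
  set z : κ → PS σ := fun i e => coeff e (Z (weight w e + 1) i) with hz
  have h3 : ∀ n i, z i - Z n i ∈ Mk w n := by
    intro n i e he
    obtain ⟨m, rfl⟩ : ∃ m, n = weight w e + 1 + m := ⟨n - (weight w e + 1), by omega⟩
    have h4 := h2 (weight w e + 1) m i e (by omega)
    rw [map_sub, sub_eq_zero] at h4 ⊢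
    rw [h4]; rfl
  have hPz : P z := hc z fun k => ⟨Z k, hPZ k, h3 k⟩
  refine ⟨z, hPz, ?_⟩
  funext i
  rw [← sub_eq_zero]
  refine Mk_all (w := w) fun n => ?_
  have h5 := hctr n _ _ hPz (hPZ n) (h3 n) i
  have h6 := h3 (n + 1) i
  rw [hZs] at h6
  have := (Mk w (n + 1)).sub_mem h5 h6
  exact Mk_anti (l := n + 1) (by omega) (by simpa using this)

lemma prod_sub_mem {w : τ → ℕ} {k : ℕ} {a b : σ → PS τ} (h : ∀ i, a i - b i ∈ Mk w k) (d : σ →₀ ℕ) :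
    (d.prod fun i n => a i ^ n) - (d.prod fun i n => b i ^ n) ∈ Mk w k := by
  rw [← Ideal.Quotient.mk_eq_mk_iff_sub_mem]
  simp only [Finsupp.prod, map_prod, map_pow]
  refine Finset.prod_congr rfl fun i _ => ?_
  rw [(Ideal.Quotient.mk_eq_mk_iff_sub_mem _ _).2 (h i)]

lemma subst_congr {w : τ → ℕ} {k : ℕ} {a b : σ → PS τ} (ha : HasSubst a) (hb : HasSubst b)
    (h : ∀ i, a i - b i ∈ Mk w k) (F : PS σ) : subst a F - subst b F ∈ Mk w k := by
  intro e he
  rw [map_sub, sub_eq_zero, coeff_subst ha, coeff_subst hb]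
  refine finsum_congr fun d => ?_
  have := prod_sub_mem h d e he
  rw [map_sub, sub_eq_zero] at this
  rw [this]

lemma exists_of_weight {w : σ → ℕ} {e : σ →₀ ℕ} (he : ¬ weight w e < 1) : ∃ i, e i ≠ 0 ∧ w i ≠ 0 := by
  by_contra! hc
  apply he
  rw [weight_apply, Finsupp.sum]
  rw [Finset.sum_eq_zero]; · simp
  intro i hi
  rw [hc i (by simpa using hi)]; simp

lemma subst_congr_succ {w : τ → ℕ} {v : σ → ℕ} {k : ℕ} {a b : σ → PS τ} (ha : HasSubst a) (hb : HasSubst b)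
    (h : ∀ i, a i - b i ∈ Mk w k) (hv : ∀ i, v i ≠ 0 → a i = b i ∧ a i ∈ Mk w 1)
    {F : PS σ} (hF : F ∈ Mk v 1) : subst a F - subst b F ∈ Mk w (k + 1) := by
  classical
  intro e he
  rw [map_sub, sub_eq_zero, coeff_subst ha, coeff_subst hb]
  refine finsum_congr fun d => ?_
  by_cases hd : weight v d < 1
  · rw [hF d hd, zero_smul, zero_smul]
  obtain ⟨i, hi, hwi⟩ := exists_of_weight hd
  obtain ⟨d', rfl⟩ : ∃ e', d = single i 1 + e' :=
    ⟨d - single i 1, (add_tsub_cancel_of_le (by rw [Finsupp.single_le_iff]; omega)).symm⟩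
  obtain ⟨h1, h2⟩ := hv i hwi
  congr 1
  rw [← sub_eq_zero, ← map_sub]
  rw [Finsupp.prod_add_index' (by simp) (by intros; rw [pow_add]),
    Finsupp.prod_add_index' (by simp) (by intros; rw [pow_add])]
  rw [prod_single_index (by simp), prod_single_index (by simp), ← h1, ← mul_sub, pow_one]
  exact Mk_mul h2 (prod_sub_mem h d') e (by omega)

lemma const_zero_of_Mk {w : σ → ℕ} {F : PS σ} (h : F ∈ Mk w 1) : constantCoeff F = 0 := by
  rw [← coeff_zero_eq_constantCoeff_apply]; exact h 0 (by simp)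

lemma const_subst {a : σ → PS τ} (ha : HasSubst a) (h : ∀ i, constantCoeff (a i) = 0) {F : PS σ}
    (hF : constantCoeff F = 0) : constantCoeff (subst a F) = 0 :=
  constantCoeff_subst_eq_zero ha h hF

/-- weight 1 on left variables -/
abbrev wl : τ ⊕ κ → ℕ := Sum.elim (fun _ => 1) (fun _ => 0)

lemma const_elim {a : τ → PS σ} {z : κ → PS σ} (ha : ∀ i, constantCoeff (a i) = 0)
    (hz : ∀ i, constantCoeff (z i) = 0) (j : τ ⊕ κ) : constantCoeff (Sum.elim a z j) = 0 := by
  rcases j with j | j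
  · exact ha j
  · exact hz j

lemma ift_contr [Finite τ] [Finite κ] {Ψ : PS (τ ⊕ κ)} (hΨ : Ψ ∈ Mk wl 1) {a : τ → PS σ}
    (ha : ∀ i, constantCoeff (a i) = 0) {k : ℕ} {z z' : κ → PS σ} (hz : ∀ i, constantCoeff (z i) = 0)
    (hz' : ∀ i, constantCoeff (z' i) = 0) (h : ∀ i, z i - z' i ∈ Mk (fun _ => 1) k) :
    subst (Sum.elim a z) Ψ - subst (Sum.elim a z') Ψ ∈ Mk (fun _ => 1) (k + 1) := by
  refine subst_congr_succ (v := wl) (hasS (const_elim ha hz)) (hasS (const_elim ha hz')) ?_ ?_ hΨ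
  · rintro (j | j)
    · simp
    · exact h j
  · rintro (j | j) hj
    · exact ⟨rfl, mem_Mk_one_one.2 (ha j)⟩
    · simp at hj

lemma ift_unique [Finite τ] [Finite κ] {Ψ : κ → PS (τ ⊕ κ)} (hΨ : ∀ i, Ψ i ∈ Mk wl 1) {a : τ → PS σ}
    (ha : ∀ i, constantCoeff (a i) = 0) {z z' : κ → PS σ} (hz : ∀ i, constantCoeff (z i) = 0)
    (hz' : ∀ i, constantCoeff (z' i) = 0) (h : ∀ i, z i = subst (Sum.elim a z) (Ψ i))
    (h' : ∀ i, z' i = subst (Sum.elim a z') (Ψ i)) : z = z' := by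
  have : ∀ k i, z i - z' i ∈ Mk (fun _ => 1) k := by
    intro k
    induction k with
    | zero => intro i; exact Mk_zero _ _
    | succ k ih =>
      intro i
      rw [h i, h' i]
      exact ift_contr (hΨ i) ha hz hz' ih
  funext i
  rw [← sub_eq_zero]
  exact Mk_all fun k => this k i

lemma ift [Finite τ] [Finite κ] {Ψ : κ → PS (τ ⊕ κ)} (hΨ : ∀ i, Ψ i ∈ Mk wl 1) (hc : ∀ i, Conv (Ψ i)) :
    ∃ z : κ → PS τ, (∀ i, Conv (z i)) ∧ (∀ i, constantCoeff (z i) = 0) ∧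
      ∀ i, z i = subst (Sum.elim X z) (Ψ i) := by
  cases nonempty_fintype κ
  obtain ⟨ρ, hρ, h1⟩ := Conv.exists_common hc
  have h1' : ∀ i, nrm (fun _ => ρ) (Ψ i) < ⊤ := fun i => h1 i _ fun _ => le_rfl
  set M : ℝ≥0 := ∑ i, (nrm (fun _ => ρ) (Ψ i)).toNNReal with hM
  set ε : ℝ≥0 := min 1 (ρ / (M + 1)) with hε
  have hε0 : 0 < ε := lt_min one_pos (by positivity)
  have hX : ∀ i : τ, constantCoeff (X i : PS τ) = 0 := fun i => constantCoeff_X i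
  refine Exists.elim (fixpt (κ := κ) (σ := τ) (fun _ => 1)
    (fun z i => subst (Sum.elim X z) (Ψ i))
    (fun z => (∀ i, constantCoeff (z i) = 0) ∧ (∀ i, nrm (fun _ => ε * ρ) (z i) ≤ ρ))
    ⟨by simp, by simp [nrm_zero]⟩ ?_ ?_ ?_) ?_
  rotate_left 3
  · rintro z ⟨⟨hz1, hz2⟩, hz⟩
    exact ⟨z, fun i => ⟨ε * ρ, by positivity, (hz2 i).trans_lt ENNReal.coe_lt_top⟩, hz1,
      fun i => (congrFun hz i).symm⟩
  · rintro z ⟨hz1, hz2⟩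
    have hs := hasS (const_elim hX hz1)
    refine ⟨fun i => const_subst hs (const_elim hX hz1) (const_zero_of_Mk (hΨ i)), fun i => ?_⟩
    refine (nrm_subst_le (s := Sum.elim (fun _ => ε * ρ) (fun _ => ρ)) hs ?_ _).trans ?_
    · rintro (j | j)
      · simp [nrm_X]
      · exact hz2 j
    refine (nrm_scale (r := fun _ => ρ) (ε := ε) ?_ ?_ (hΨ i)).trans ?_
    · rintro (j | j)
      · exact mul_le_of_le_one_left' (min_le_left _ _)
      · exact le_rfl
    · rintro (j | j) hj
      · exact le_rfl
      · simp at hj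
    have : (nrm (fun _ => ρ) (Ψ i)).toNNReal ≤ M :=
      Finset.single_le_sum (f := fun i => (nrm (fun _ => ρ) (Ψ i)).toNNReal) (fun _ _ => zero_le) (Finset.mem_univ i)
    rw [← ENNReal.coe_toNNReal (h1' i).ne, ← ENNReal.coe_mul, ENNReal.coe_le_coe]
    calc ε * _ ≤ (ρ / (M + 1)) * (M + 1) := mul_le_mul' (min_le_right _ _) (this.trans (by simp))
      _ = ρ := div_mul_cancel₀ _ (by positivity)
  · intro z hz
    constructor
    · intro i
      obtain ⟨z', ⟨h1, h2⟩, h3⟩ := hz 1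
      have := mem_Mk_one_one.1 (h3 i)
      rwa [map_sub, h1 i, sub_zero] at this
    · intro i
      refine nrm_le_of_approx (w := fun _ => 1) fun k => ?_
      obtain ⟨z', ⟨h1, h2⟩, h3⟩ := hz k
      exact ⟨z' i, h2 i, h3 i⟩
  · rintro k z z' ⟨hz1, _⟩ ⟨hz2, _⟩ h i
    exact ift_contr (hΨ i) hX hz1 hz2 h

/-! Division -/

noncomputable def Sh (D : ℕ) (F : PS (Option τ)) : PS (Option τ) := fun e => coeff (e + single none D) F

lemma coeff_Sh (D : ℕ) (F : PS (Option τ)) (e : Option τ →₀ ℕ) :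
    coeff e (Sh D F) = coeff (e + single none D) F := rfl

def Low (D : ℕ) (F : PS (Option τ)) : Prop := ∀ e, D ≤ e none → coeff e F = 0

lemma Low_iff {D : ℕ} {F : PS (Option τ)} : Low D F ↔ Sh D F = 0 := by
  classical
  constructor
  · intro h; ext e; rw [coeff_Sh]; exact h _ (by simp)
  · intro h e he
    obtain ⟨e', rfl⟩ : ∃ e', e = e' + single none D :=
      ⟨e - single none D, (tsub_add_cancel_of_le (by rw [Finsupp.single_le_iff]; omega)).symm⟩
    rw [← coeff_Sh, h, map_zero]

lemma Sh_add (D : ℕ) (F G : PS (Option τ)) : Sh D (F + G) = Sh D F + Sh D G := by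
  ext e; simp only [coeff_Sh, map_add]

lemma Sh_sub (D : ℕ) (F G : PS (Option τ)) : Sh D (F - G) = Sh D F - Sh D G := by
  ext e; simp only [coeff_Sh, map_sub]

lemma Sh_mul (D : ℕ) (F : PS (Option τ)) : Sh D (X none ^ D * F) = F := by
  ext e
  rw [coeff_Sh, X_pow_eq, add_comm, coeff_add_monomial_mul, one_mul]

lemma Low.add {D : ℕ} {F G : PS (Option τ)} (hF : Low D F) (hG : Low D G) : Low D (F + G) := by
  rw [Low_iff] at *; rw [Sh_add, hF, hG, add_zero]

lemma Low.sub {D : ℕ} {F G : PS (Option τ)} (hF : Low D F) (hG : Low D G) : Low D (F - G) := by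
  rw [Low_iff] at *; rw [Sh_sub, hF, hG, sub_zero]

lemma Low.zero {D : ℕ} : Low D (0 : PS (Option τ)) := fun e _ => by simp

/-- weight 0 on t=none, 1 else -/
def wo : Option τ → ℕ := fun o => o.elim 0 (fun _ => 1)

lemma weight_wo_none (k : ℕ) : weight (wo (τ := τ)) (single none k) = 0 := by
  simp [weight_single, wo]

lemma Sh_Mk {D k : ℕ} {F : PS (Option τ)} (h : F ∈ Mk wo k) : Sh D F ∈ Mk wo k := by
  intro e he
  rw [coeff_Sh]
  exact h _ (by rw [map_add, weight_wo_none]; simpa using he)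

lemma nrm_Sh {D : ℕ} {r : Option τ → ℝ≥0} (hr : r none ≠ 0) (F : PS (Option τ)) :
    nrm r (Sh D F) ≤ (((r none)⁻¹ ^ D : ℝ≥0) : ℝ≥0∞) * nrm r F := by
  unfold nrm
  rw [← ENNReal.tsum_mul_left]
  refine le_trans (le_of_eq ?_) (ENNReal.tsum_comp_le_tsum_of_injective (add_left_injective (single none D)) _)
  refine tsum_congr fun e => ?_
  rw [coeff_Sh]
  simp only [mono_add, mono_single]
  have : (((r none)⁻¹ ^ D : ℝ≥0) : ℝ≥0∞) * (r none : ℝ≥0∞) ^ D = 1 := by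
    rw [← ENNReal.coe_pow, ← ENNReal.coe_mul, ← mul_pow, inv_mul_cancel₀ hr]; simp
  calc _ = (‖coeff (e + single none D) F‖ₑ * mono r e) * 1 := by rw [mul_one]
    _ = _ := by rw [← this]; ring

lemma wdiv_aux {D : ℕ} {V : PS (Option τ)} (hV : V ∈ Mk wo 1) (F : PS (Option τ))
    {r : Option τ → ℝ≥0} {B : ℝ≥0∞} (hB : ∀ Q, nrm r Q ≤ B → nrm r (Sh D F - Sh D (V * Q)) ≤ B) :
    ∃ Q R, F = (X none ^ D + V) * Q + R ∧ Low D R ∧ nrm r Q ≤ B := by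
  refine Exists.elim (fixpt (κ := Unit) wo (fun z _ => Sh D F - Sh D (V * z ()))
    (fun z => nrm r (z ()) ≤ B) (by simp [nrm_zero]) (fun z hz => hB _ hz) ?_ ?_) ?_
  rotate_left 2
  · rintro z ⟨hz, hz'⟩
    refine ⟨z (), F - (X none ^ D + V) * z (), by ring, ?_, hz⟩
    rw [Low_iff, add_mul, Sh_sub, Sh_add, Sh_mul]
    have := congrFun hz' ()
    nth_rewrite 1 [← this]
    ring
  · intro z hz
    refine nrm_le_of_approx (w := wo) fun k => ?_
    obtain ⟨z', h1, h2⟩ := hz k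
    exact ⟨z' (), h1, h2 ()⟩
  · intro k z z' _ _ h i
    have : Sh D F - Sh D (V * z ()) - (Sh D F - Sh D (V * z' ())) = Sh D (V * (z' () - z ())) := by
      rw [mul_sub, Sh_sub]; ring
    simp only [this]
    have h2 := (Mk wo k).neg_mem (h ())
    rw [neg_sub] at h2
    have := Mk_mul hV h2
    rw [add_comm] at this
    exact Sh_Mk this

lemma wdiv {D : ℕ} {V : PS (Option τ)} (hV : V ∈ Mk wo 1) (F : PS (Option τ)) :
    ∃ Q R, F = (X none ^ D + V) * Q + R ∧ Low D R := by
  obtain ⟨Q, R, h, h', _⟩ := wdiv_aux (r := 1) (B := ⊤) (D := D) hV F (by simp)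
  exact ⟨Q, R, h, h'⟩

lemma wdiv_unique {D : ℕ} {V : PS (Option τ)} (hV : V ∈ Mk wo 1) {Q R : PS (Option τ)}
    (h : (X none ^ D + V) * Q + R = 0) (hR : Low D R) : Q = 0 ∧ R = 0 := by
  have h1 : Q = - Sh D (V * Q) := by
    have := congrArg (Sh D) h
    rw [add_mul, Sh_add, Sh_add, Sh_mul, Low_iff.1 hR] at this
    have h0 : Sh D (0 : PS (Option τ)) = 0 := by ext e; simp [coeff_Sh]
    rw [h0] at this
    linear_combination this
  have h2 : ∀ k, Q ∈ Mk wo k := by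
    intro k
    induction k with
    | zero => exact Mk_zero _ _
    | succ k ih =>
      rw [h1]
      have := Mk_mul hV ih
      rw [add_comm] at this
      exact (Mk wo (k+1)).neg_mem (Sh_Mk this)
  have h3 : Q = 0 := Mk_all h2
  rw [h3] at h
  exact ⟨h3, by simpa using h⟩

lemma wdiv_conv [Finite τ] {D : ℕ} {V : PS (Option τ)} (hV : V ∈ Mk wo 1) (hVc : Conv V) {F : PS (Option τ)}
    (hF : Conv F) :
    ∃ Q R, F = (X none ^ D + V) * Q + R ∧ Low D R ∧ Conv Q ∧ Conv R := by
  obtain ⟨ρ, hρ, h1⟩ := Conv.exists_common (ι := Bool) (F := fun b => if b then V else F)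
    (by rintro (b | b) <;> simpa)
  have hV1 : nrm (fun _ => ρ) V < ⊤ := by simpa using h1 true (fun _ => ρ) (fun _ => le_rfl)
  have hF1 := fun r => h1 false r
  simp only [Bool.false_eq_true, if_false] at hF1
  set M := (nrm (fun _ => ρ) V).toNNReal with hM
  set K : ℝ≥0 := ρ⁻¹ ^ D with hK
  set ε : ℝ≥0 := min 1 (1 / (2 * (K * M + 1))) with hε
  have hε0 : 0 < ε := lt_min one_pos (by positivity)
  set r : Option τ → ℝ≥0 := fun o => o.elim ρ (fun _ => ε * ρ) with hr
  have hrρ : ∀ i, r i ≤ ρ := by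
    rintro (_ | i)
    · exact le_rfl
    · exact mul_le_of_le_one_left' (min_le_left _ _)
  have hVr : nrm r V ≤ ε * M := by
    refine (nrm_scale (r := fun _ => ρ) (ε := ε) hrρ ?_ hV).trans ?_
    · rintro (_ | i) hi
      · simp [wo] at hi
      · exact le_rfl
    · rw [hM, ENNReal.coe_toNNReal hV1.ne]
  have hFr := hF1 r hrρ
  have hne : r none ≠ 0 := hρ.ne'
  set B : ℝ≥0∞ := 2 * (K * nrm r F) with hB
  have hBt : B < ⊤ := by
    rw [hB]; exact ENNReal.mul_lt_top (by simp) (ENNReal.mul_lt_top ENNReal.coe_lt_top hFr)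
  have hKε : K * (ε * M) ≤ 1 / 2 := by
    calc K * (ε * M) = ε * (K * M) := by ring
      _ ≤ (1 / (2 * (K * M + 1))) * (K * M + 1) := mul_le_mul' (min_le_right _ _) (by simp)
      _ = 1 / 2 := by field_simp
  obtain ⟨Q, R, h, hR, hQ⟩ := wdiv_aux (D := D) hV F (r := r) (B := B) (by
    intro Q hQ
    rw [sub_eq_add_neg]
    refine (nrm_add_le _ _ _).trans ?_
    rw [nrm_neg]
    have e1 : nrm r (Sh D F) ≤ K * nrm r F := nrm_Sh hne F
    have e2 : nrm r (Sh D (V * Q)) ≤ K * nrm r F := by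
      refine (nrm_Sh hne _).trans ?_
      calc (K : ℝ≥0∞) * nrm r (V * Q) ≤ K * ((ε * M) * B) := by
            gcongr; exact (nrm_mul_le _ _ _).trans (mul_le_mul' hVr hQ)
        _ = ((K * (ε * M) : ℝ≥0) : ℝ≥0∞) * B := by push_cast; ring
        _ ≤ ((1 / 2 : ℝ≥0) : ℝ≥0∞) * B := by gcongr
        _ = K * nrm r F := by
            rw [hB, ← mul_assoc]
            have : ((1 / 2 : ℝ≥0) : ℝ≥0∞) * 2 = 1 := by
              rw [← ENNReal.coe_ofNat, ← ENNReal.coe_mul]; simp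
            rw [this, one_mul]
    calc _ ≤ K * nrm r F + K * nrm r F := add_le_add e1 e2
      _ = B := by rw [hB]; ring)
  have hQc : Conv Q := Conv.of_nrm (r := r) (by
    rintro (_ | i)
    · exact hρ
    · change 0 < ε * ρ; positivity) (hQ.trans_lt hBt)
  refine ⟨Q, R, h, hR, hQc, ?_⟩
  have : R = F - (X none ^ D + V) * Q := by rw [h]; ring
  rw [this]
  exact hF.sub ((((Conv.X _).pow _).add hVc).mul hQc)

end ART


namespace ART
open MvPowerSeries Finsupp
open scoped ENNReal NNReal

variable {σ τ ι κ : Type}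

noncomputable def ren (F : PS τ) : PS (Option τ) := subst (fun i => X (some i) : τ → PS (Option τ)) F

lemma hasS_X (f : σ → τ) [Finite σ] : HasSubst (fun i => X (f i) : σ → PS τ) :=
  hasS fun _ => constantCoeff_X _

lemma sub_comp [Finite σ] [Finite τ] {a : σ → PS τ} (ha : ∀ i, constantCoeff (a i) = 0)
    {b : τ → PS ι} (hb : ∀ i, constantCoeff (b i) = 0) (F : PS σ) :
    subst b (subst a F) = subst (fun i => subst b (a i)) F :=
  subst_comp_subst_apply (hasS ha) (hasS hb) F

lemma sub_sum {a : σ → PS τ} (ha : HasSubst a) (s : Finset ι) (F : ι → PS σ) :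
    subst a (∑ i ∈ s, F i) = ∑ i ∈ s, subst a (F i) := by
  simp only [← coe_substAlgHom ha, map_sum]

lemma sub_neg' {a : σ → PS τ} (ha : HasSubst a) (F : PS σ) : subst a (-F) = - subst a F := by
  simp only [← coe_substAlgHom ha, map_neg]

lemma sub_zero' {a : σ → PS τ} (ha : HasSubst a) : subst a (0 : PS σ) = 0 := by
  simp only [← coe_substAlgHom ha, map_zero]

lemma sub_one' {a : σ → PS τ} (ha : HasSubst a) : subst a (1 : PS σ) = 1 := by
  simp only [← coe_substAlgHom ha, map_one]

lemma sub_C {a : σ → PS τ} (ha : HasSubst a) (r : ℝ) : subst a (C r : PS σ) = C r := by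
  exact subst_C r

lemma sub_det {n : Type} [Fintype n] [DecidableEq n] {a : σ → PS τ} (ha : HasSubst a) (M : Matrix n n (PS σ)) :
    subst a M.det = (Matrix.of fun i j => subst a (M i j)).det := by
  rw [← coe_substAlgHom ha, AlgHom.map_det]
  rfl

lemma sub_adj {n : Type} [Fintype n] [DecidableEq n] {a : σ → PS τ} (ha : HasSubst a) (M : Matrix n n (PS σ))
    (i j : n) :
    subst a (M.adjugate i j) = (Matrix.of fun i j => subst a (M i j)).adjugate i j := by
  rw [← coe_substAlgHom ha]
  have := AlgHom.map_adjugate (substAlgHom ha) M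
  exact congrFun (congrFun this i) j

lemma const_sub [Finite σ] {a : σ → PS τ} (ha : ∀ i, constantCoeff (a i) = 0) (F : PS σ) :
    constantCoeff (subst a F) = constantCoeff F := by
  have h : F = (F - C (constantCoeff F)) + C (constantCoeff F) := by ring
  have h2 : constantCoeff (F - C (constantCoeff F)) = 0 := by simp
  conv_lhs => rw [h]
  rw [subst_add (hasS ha), map_add, const_subst (hasS ha) ha h2, sub_C (hasS ha)]
  simp

lemma coeff_ren [Finite τ] (F : PS τ) (e : Option τ →₀ ℕ) :
    coeff e (ren F) = if e none = 0 then coeff e.some F else 0 := by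
  have h : ren F = rename (Function.Embedding.some : τ ↪ Option τ) F := by
    rw [rename_eq_subst]; rfl
  rw [h]
  split_ifs with h0
  · have : e = embDomain Function.Embedding.some e.some := by
      ext o
      rcases o with _ | i
      · rw [h0]; simp
      · rw [embDomain_some_some]; rfl
    conv_lhs => rw [this]
    rw [coeff_embDomain_rename]
  · apply coeff_rename_eq_zero
    rintro ⟨x, rfl⟩
    apply h0
    rw [← embDomain_eq_mapDomain]
    simp

noncomputable def cf (j : ℕ) (F : PS (Option τ)) : PS τ := fun e => coeff (e.optionElim j) F

lemma coeff_cf (j : ℕ) (F : PS (Option τ)) (e : τ →₀ ℕ) : coeff e (cf j F) = coeff (e.optionElim j) F := rfl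

lemma cf_add (j : ℕ) (F G : PS (Option τ)) : cf j (F + G) = cf j F + cf j G := by
  ext e; simp only [coeff_cf, map_add]

lemma cf_zero' (j : ℕ) : cf j (0 : PS (Option τ)) = 0 := by
  ext e; simp only [coeff_cf, map_zero]

lemma cf_sum' (j : ℕ) (s : Finset ι) (F : ι → PS (Option τ)) : cf j (∑ i ∈ s, F i) = ∑ i ∈ s, cf j (F i) := by
  classical
  induction s using Finset.induction_on with
  | empty => simp [cf_zero']
  | insert a s ha ih => rw [Finset.sum_insert ha, Finset.sum_insert ha, cf_add, ih]

lemma cf_Sh (j k : ℕ) (F : PS (Option τ)) : cf j (Sh k F) = cf (j + k) F := by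
  ext e
  rw [coeff_cf, coeff_Sh, coeff_cf]
  congr 1
  have := optionElim_add e 0 j k
  rw [add_zero, optionElim_zero] at this
  rw [this]

lemma Sh_Sh (j k : ℕ) (F : PS (Option τ)) : Sh j (Sh k F) = Sh (j + k) F := by
  ext e
  simp only [coeff_Sh, add_assoc, ← single_add]

lemma decomp1 [Finite τ] (F : PS (Option τ)) : F = ren (cf 0 F) + X none * Sh 1 F := by
  classical
  ext e
  rw [map_add, coeff_ren]
  split_ifs with h
  · have h1 : coeff e (X none * Sh 1 F) = 0 :=
      X_dvd_iff.1 (Dvd.intro _ rfl) e h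
    rw [h1, add_zero, coeff_cf]
    conv_lhs => rw [← optionElim_some e, h]
  · obtain ⟨e', rfl⟩ : ∃ e', e = single none 1 + e' :=
      ⟨e - single none 1, (add_tsub_cancel_of_le (by rw [Finsupp.single_le_iff]; omega)).symm⟩
    rw [zero_add, X, coeff_add_monomial_mul, one_mul, coeff_Sh, add_comm]

lemma decomp [Finite τ] (D : ℕ) (F : PS (Option τ)) :
    F = ∑ j ∈ Finset.range D, X none ^ j * ren (cf j F) + X none ^ D * Sh D F := by
  induction D with
  | zero =>
    have : Sh 0 F = F := by ext e; rw [coeff_Sh]; simp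
    simp [this]
  | succ D ih =>
    conv_lhs => rw [ih, decomp1 (Sh D F), cf_Sh, Sh_Sh, zero_add, add_comm 1 D]
    rw [Finset.sum_range_succ, pow_succ]; ring

lemma Low.eq_sum [Finite τ] {D : ℕ} {F : PS (Option τ)} (h : Low D F) :
    F = ∑ j : Fin D, X none ^ (j : ℕ) * ren (cf j F) := by
  conv_lhs => rw [decomp D F, Low_iff.1 h, mul_zero, add_zero, Finset.sum_range]

lemma ren_zero [Finite τ] : ren (0 : PS τ) = 0 := sub_zero' (hasS_X _)

lemma cf_ren [Finite τ] (F : PS τ) (k : ℕ) : cf k (ren F) = if k = 0 then F else 0 := by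
  ext e
  rw [coeff_cf, coeff_ren, optionElim_apply_none, some_optionElim]
  split_ifs <;> simp

lemma cf_mono [Finite τ] (F : PS τ) (j k : ℕ) : cf k (X none ^ j * ren F) = if k = j then F else 0 := by
  by_cases h : k < j
  · rw [if_neg (by omega)]
    ext e
    rw [coeff_cf]
    exact X_pow_dvd_iff.1 (Dvd.intro _ rfl) _ (by rwa [optionElim_apply_none])
  · obtain ⟨m, rfl⟩ : ∃ m, k = m + j := ⟨k - j, by omega⟩
    rw [← cf_Sh, Sh_mul, cf_ren]
    simp

lemma cf_gen [Finite τ] {D : ℕ} (c : Fin D → PS τ) (j : Fin D) :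
    cf j (∑ j : Fin D, X none ^ (j : ℕ) * ren (c j)) = c j := by
  rw [cf_sum', Finset.sum_eq_single j]
  · rw [cf_mono, if_pos rfl]
  · intro b _ hb; rw [cf_mono, if_neg]; exact fun h => hb (Fin.ext h.symm)
  · simp

lemma Low_gen [Finite τ] {D : ℕ} (c : Fin D → PS τ) : Low D (∑ j : Fin D, X none ^ (j : ℕ) * ren (c j)) := by
  intro e he
  rw [← optionElim_some e, ← coeff_cf, cf_sum', Finset.sum_eq_zero, map_zero]
  intro j _
  rw [cf_mono, if_neg]
  have := j.2
  omega

lemma Conv.cf {F : PS (Option τ)} (hF : Conv F) (j : ℕ) : Conv (cf j F) := by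
  obtain ⟨ρ, hρ, h⟩ := hF
  refine ⟨ρ, hρ, ?_⟩
  have key : nrm (fun _ => ρ) (ART.cf j F) ≤ ((ρ⁻¹ ^ j : ℝ≥0) : ℝ≥0∞) * nrm (fun _ => ρ) F := by
    unfold nrm
    rw [← ENNReal.tsum_mul_left]
    have hinj : Function.Injective (fun e : τ →₀ ℕ => e.optionElim j) := by
      intro a b hab
      have := congrArg Finsupp.some hab
      simpa using this
    refine le_trans (le_of_eq ?_) (ENNReal.tsum_comp_le_tsum_of_injective hinj _)
    refine tsum_congr fun e => ?_
    rw [coeff_cf]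
    have hm : mono (fun _ => ρ) (e.optionElim j) = (ρ : ℝ≥0∞) ^ j * mono (fun _ => ρ) e := by
      unfold mono
      rw [Finsupp.prod_option_index _ _ (by simp) (by intros; rw [pow_add])]
      rw [optionElim_apply_none, some_optionElim]
      push_cast; rfl
    simp only [hm]
    have : ((ρ⁻¹ ^ j : ℝ≥0) : ℝ≥0∞) * (ρ : ℝ≥0∞) ^ j = 1 := by
      rw [← ENNReal.coe_pow, ← ENNReal.coe_mul, ← mul_pow, inv_mul_cancel₀ hρ.ne']; simp
    calc _ = (‖coeff (e.optionElim j) F‖ₑ * mono (fun _ => ρ) e) * 1 := by rw [mul_one]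
      _ = _ := by rw [← this]; ring
  exact key.trans_lt (ENNReal.mul_lt_top ENNReal.coe_lt_top h)

lemma Conv.Sh {F : PS (Option τ)} (hF : Conv F) (D : ℕ) : Conv (Sh D F) := by
  obtain ⟨ρ, hρ, h⟩ := hF
  exact ⟨ρ, hρ, (nrm_Sh (r := fun _ => ρ) hρ.ne' F).trans_lt (ENNReal.mul_lt_top ENNReal.coe_lt_top h)⟩

lemma Conv.ren [Finite τ] {F : PS τ} (hF : Conv F) : Conv (ren F) :=
  Conv.subst (fun _ => constantCoeff_X _) (fun _ => Conv.X _) hF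

lemma const_ren [Finite τ] (F : PS τ) : constantCoeff (ren F) = constantCoeff F := by
  rw [← coeff_zero_eq_constantCoeff_apply, coeff_ren]; simp

lemma eq_single_of_wo {e : Option τ →₀ ℕ} (h : weight wo e < 1) : e = single none (e none) := by
  classical
  ext o
  rcases o with _ | i
  · simp
  · rw [single_eq_of_ne (by simp)]
    by_contra hc
    have := le_weight (wo (τ := τ)) (s := some i) (by simp [wo]) e
    omega

lemma ren_Mk [Finite τ] {F : PS τ} (h : constantCoeff F = 0) : ren F ∈ Mk wo 1 := by
  intro e he
  rw [eq_single_of_wo he, coeff_ren]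
  split_ifs
  · rw [some_single_none, coeff_zero_eq_constantCoeff_apply, h]
  · rfl

lemma gen_Mk [Finite τ] {d : ℕ} {a : Fin d → PS τ} (h : ∀ j, constantCoeff (a j) = 0) :
    (∑ j : Fin d, X none ^ (j : ℕ) * ren (a j)) ∈ Mk wo 1 :=
  Ideal.sum_mem _ fun j _ => Ideal.mul_mem_left _ _ (ren_Mk (h j))

/-- the map on Option variables extending `p` -/
noncomputable def ext (p : ι → PS τ) : Option ι → PS (Option τ) := fun o => o.elim (X none) (fun k => ren (p k))

lemma const_ext [Finite τ] {p : ι → PS τ} (hp : ∀ i, constantCoeff (p i) = 0) (o : Option ι) :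
    constantCoeff (ext p o) = 0 := by
  rcases o with _ | i
  · exact constantCoeff_X _
  · exact (const_ren _).trans (hp i)

lemma ext_ren [Finite τ] [Finite ι] {p : ι → PS τ} (hp : ∀ i, constantCoeff (p i) = 0) (F : PS ι) :
    subst (ext p) (ren F) = ren (subst p F) := by
  unfold ren
  rw [sub_comp (fun _ => constantCoeff_X _) (const_ext hp), sub_comp hp (fun _ => constantCoeff_X _)]
  congr 1
  funext i
  rw [subst_X (hasS (const_ext hp))]
  rfl

lemma ext_t [Finite τ] [Finite ι] {p : ι → PS τ} (hp : ∀ i, constantCoeff (p i) = 0) :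
    subst (ext p) (X none : PS (Option ι)) = X none := by
  rw [subst_X (hasS (const_ext hp))]
  rfl

lemma ext_gen [Finite τ] [Finite ι] {p : ι → PS τ} (hp : ∀ i, constantCoeff (p i) = 0) {D : ℕ} (c : Fin D → PS ι) :
    subst (ext p) (∑ j : Fin D, X none ^ (j : ℕ) * ren (c j)) =
      ∑ j : Fin D, X none ^ (j : ℕ) * ren (subst p (c j)) := by
  have hs := hasS (const_ext hp)
  rw [sub_sum hs]
  refine Finset.sum_congr rfl fun j _ => ?_
  rw [subst_mul hs, subst_pow hs, ext_t hp, ext_ren hp]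

lemma ext_Low [Finite τ] [Finite ι] {p : ι → PS τ} (hp : ∀ i, constantCoeff (p i) = 0) {D : ℕ} {R : PS (Option ι)}
    (hR : Low D R) : Low D (subst (ext p) R) := by
  rw [hR.eq_sum, ext_gen hp]; exact Low_gen _

lemma ext_Low_zero [Finite τ] [Finite ι] {p : ι → PS τ} (hp : ∀ i, constantCoeff (p i) = 0) {D : ℕ} {R : PS (Option ι)}
    (hR : Low D R) : subst (ext p) R = 0 ↔ ∀ j : Fin D, subst p (cf j R) = 0 := by
  constructor
  · intro h j
    have h1 := ext_gen hp fun j : Fin D => cf j R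
    rw [← hR.eq_sum, h] at h1
    rw [← cf_gen (fun j : Fin D => subst p (cf j R)) j, ← h1, cf_zero']
  · intro h
    rw [hR.eq_sum, ext_gen hp]
    simp [h, ren_zero]

/-- formal Weierstrass preparation -/
lemma wprep [Finite τ] {d : ℕ} {G : PS (Option τ)} (h0 : ∀ k < d, coeff (single none k) G = 0)
    (h1 : coeff (single none d) G ≠ 0) :
    ∃ (a : Fin d → PS τ) (E : PS (Option τ)), (∀ j, constantCoeff (a j) = 0) ∧ constantCoeff E ≠ 0 ∧
      G = E * (X none ^ d + ∑ j : Fin d, X none ^ (j : ℕ) * ren (a j)) := by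
  set E0 := Sh d G with hE0
  have hE : constantCoeff E0 ≠ 0 := by
    rw [← coeff_zero_eq_constantCoeff_apply, hE0, coeff_Sh, zero_add]; exact h1
  set L := ∑ j ∈ Finset.range d, X none ^ j * ren (cf j G) with hL
  have hG : G = L + X none ^ d * E0 := decomp d G
  have hLm : L ∈ Mk wo 1 := by
    refine Ideal.sum_mem _ fun j hj => Ideal.mul_mem_left _ _ (ren_Mk ?_)
    rw [← coeff_zero_eq_constantCoeff_apply, coeff_cf, optionElim_zero]
    exact h0 j (by simpa using hj)
  set V := L * E0⁻¹ with hV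
  have hVm : V ∈ Mk wo 1 := Ideal.mul_mem_right _ _ hLm
  have hEE : E0 * E0⁻¹ = 1 := MvPowerSeries.mul_inv_cancel _ hE
  have hGV : G = E0 * (X none ^ d + V) := by
    rw [hG, hV]; linear_combination (-L) * hEE
  obtain ⟨Q, R, hQ, hR⟩ := wdiv (D := d) hVm (X none ^ d)
  have hVQ : X none ^ d * (1 - Q) - R ∈ Mk wo 1 := by
    have : X none ^ d * (1 - Q) - R = V * Q := by linear_combination hQ
    rw [this]; exact Ideal.mul_mem_right _ _ hVm
  have hRk : ∀ k < d, coeff (single none k) R = 0 := by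
    intro k hk
    have h2 := hVQ (single none k) (by rw [weight_wo_none]; omega)
    rw [map_sub, X_pow_dvd_iff.1 (Dvd.intro _ rfl) _ (by simpa using hk)] at h2
    simpa using h2
  have hQ1 : constantCoeff Q = 1 := by
    have h2 := hVQ (single none d) (by rw [weight_wo_none]; omega)
    rw [map_sub, hR (single none d) (by simp), sub_zero] at h2
    have h3 := coeff_Sh d (X none ^ d * (1 - Q)) 0
    rw [zero_add, h2, Sh_mul, coeff_zero_eq_constantCoeff_apply, map_sub, map_one] at h3
    linarith
  have hQQ : Q * Q⁻¹ = 1 := MvPowerSeries.mul_inv_cancel _ (by rw [hQ1]; exact one_ne_zero)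
  have hRn : Low d (-R) := by
    have := (Low.zero (τ := τ) (D := d)).sub hR
    rwa [zero_sub] at this
  refine ⟨fun j => cf j (-R), E0 * Q⁻¹, fun j => ?_, ?_, ?_⟩
  · rw [← coeff_zero_eq_constantCoeff_apply, coeff_cf, optionElim_zero, map_neg, hRk j j.2, neg_zero]
  · rw [map_mul]
    refine mul_ne_zero hE ?_
    intro h
    have := congrArg constantCoeff hQQ
    rw [map_mul, h] at this
    simp at this
  · rw [← hRn.eq_sum, hGV]
    linear_combination (-(E0 * (X none ^ d + V))) * hQQ - (E0 * Q⁻¹) * hQ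

end ART


namespace ART
open MvPowerSeries Finsupp
open scoped ENNReal NNReal

variable {σ τ ι κ : Type}

lemma prod_Mk {v : σ → ℕ} {w : τ → ℕ} {a : σ → PS τ} (ha : ∀ i, a i ∈ Mk w (v i)) (d : σ →₀ ℕ) :
    (d.prod fun i n => a i ^ n) ∈ Mk w (weight v d) := by
  classical
  have hp : ∀ i n, a i ^ n ∈ Mk w (n * v i) := by
    intro i n
    induction n with
    | zero => rw [Nat.zero_mul]; exact Mk_zero _ _
    | succ n ih =>
      rw [pow_succ, Nat.succ_mul]; exact Mk_mul ih (ha i)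
  rw [weight_apply]
  unfold Finsupp.prod Finsupp.sum
  induction d.support using Finset.induction_on with
  | empty => exact Mk_zero _ _
  | insert b s hb ih =>
    rw [Finset.prod_insert hb, Finset.sum_insert hb]
    exact Mk_mul (by simpa using hp b (d b)) ih

lemma subst_Mk' {v : σ → ℕ} {w : τ → ℕ} {a : σ → PS τ} (hs : HasSubst a) (ha : ∀ i, a i ∈ Mk w (v i))
    {k : ℕ} {F : PS σ} (hF : F ∈ Mk v k) : subst a F ∈ Mk w k := by
  intro e he
  rw [coeff_subst hs]
  refine finsum_eq_zero_of_forall_eq_zero fun d => ?_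
  by_cases hd : weight v d < k
  · rw [hF d hd, zero_smul]
  · rw [prod_Mk ha d e (by omega), smul_zero]

noncomputable abbrev M1 (k : ℕ) : Ideal (PS σ) := Mk (fun _ => 1) k

lemma subst_M1 [Finite σ] {a : σ → PS τ} (ha : ∀ i, constantCoeff (a i) = 0)
    {k : ℕ} {F : PS σ} (hF : F ∈ M1 k) : subst a F ∈ M1 (σ := τ) k :=
  subst_Mk' (v := fun _ => 1) (hasS ha) (fun i => mem_Mk_one_one.2 (ha i)) hF

lemma pderiv_Mk {w : σ → ℕ} {i : σ} {k : ℕ} {F : PS σ} (hF : F ∈ Mk w (k + w i)) : pderiv ℝ i F ∈ Mk w k := by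
  intro e he
  rw [coeff_pderiv, hF, zero_mul]
  rw [map_add, weight_single, smul_eq_mul, one_mul]; omega

lemma weight_one (e : σ →₀ ℕ) : weight (fun _ : σ => 1) e = degree e := by
  rw [degree_eq_weight_one]

lemma exists_poly [Finite σ] (F : PS σ) (k : ℕ) :
    F - ((truncTotal k F : MvPolynomial σ ℝ) : PS σ) ∈ M1 k := by
  intro e he
  rw [weight_one] at he
  rw [map_sub, MvPolynomial.coeff_coe, coeff_truncTotal _ he, sub_self]

lemma chain [Finite σ] [Fintype ι] {a : ι → PS σ} (ha : ∀ i, constantCoeff (a i) = 0) (F : PS ι) (i : σ) :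
    pderiv ℝ i (subst a F) = ∑ j, pderiv ℝ i (a j) * subst a (pderiv ℝ j F) := by
  classical
  have hs := hasS ha
  have hpoly : ∀ p : MvPolynomial ι ℝ, pderiv ℝ i (subst a (p : PS ι)) =
      ∑ j, pderiv ℝ i (a j) * subst a (pderiv ℝ j (p : PS ι)) := by
    intro p
    induction p using MvPolynomial.induction_on with
    | C r => simp [sub_C hs, sub_zero' hs]
    | add p q hp hq =>
      rw [MvPolynomial.coe_add, subst_add hs, map_add, hp, hq, ← Finset.sum_add_distrib]
      refine Finset.sum_congr rfl fun j _ => ?_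
      rw [map_add, subst_add hs, mul_add]
    | mul_X p k hp =>
      rw [MvPolynomial.coe_mul, subst_mul hs, MvPolynomial.coe_X, subst_X hs, Derivation.leibniz, hp]
      have : ∀ j, pderiv ℝ i (a j) * subst a (pderiv ℝ j ((p : PS ι) * X k)) =
          (if j = k then pderiv ℝ i (a j) * subst a (p : PS ι) else 0) +
            a k * (pderiv ℝ i (a j) * subst a (pderiv ℝ j (p : PS ι))) := by
        intro j
        rw [Derivation.leibniz, subst_add hs, smul_eq_mul, smul_eq_mul, subst_mul hs, subst_mul hs, subst_X hs]
        split_ifs with h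
        · subst h; rw [pderiv_X_self, sub_one' hs]; ring
        · rw [pderiv_X_of_ne (Ne.symm h), sub_zero' hs]; ring
      simp only [this, Finset.sum_add_distrib, smul_eq_mul, ← Finset.mul_sum]
      simp [mul_comm]
  rw [← sub_eq_zero]
  refine Mk_all (w := fun _ => 1) fun k => ?_
  set p := truncTotal (k + 1) F with hp
  set G := F - (p : PS ι) with hG
  have hGm : G ∈ M1 (k + 1) := exists_poly F (k + 1)
  have hF : F = p + G := by rw [hG]; ring
  rw [hF, subst_add hs, map_add, hpoly]
  simp only [map_add, subst_add hs, mul_add, Finset.sum_add_distrib]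
  rw [add_sub_add_left_eq_sub]
  refine Ideal.sub_mem _ (pderiv_Mk (subst_M1 ha hGm)) (Ideal.sum_mem _ fun j _ => Ideal.mul_mem_left _ _ ?_)
  exact subst_M1 ha (pderiv_Mk hGm)

/-- evaluate `none ↦ s`. -/
def opt (s : PS σ) (f : ι → PS σ) : Option ι → PS σ := fun o => o.elim s f

lemma const_opt {s : PS σ} {f : ι → PS σ} (hs : constantCoeff s = 0) (hf : ∀ i, constantCoeff (f i) = 0)
    (o : Option ι) : constantCoeff (opt s f o) = 0 := by
  rcases o with _ | i
  · exact hs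
  · exact hf i

lemma opt_ren [Finite ι] {s : PS σ} {f : ι → PS σ} (hs : constantCoeff s = 0) (hf : ∀ i, constantCoeff (f i) = 0)
    (F : PS ι) : subst (opt s f) (ren F) = subst f F := by
  unfold ren
  rw [sub_comp (fun _ => constantCoeff_X _) (const_opt hs hf)]
  congr 1
  funext i
  rw [subst_X (hasS (const_opt hs hf))]
  rfl

lemma opt_t [Finite ι] {s : PS σ} {f : ι → PS σ} (hs : constantCoeff s = 0) (hf : ∀ i, constantCoeff (f i) = 0) :
    subst (opt s f) (X none : PS (Option ι)) = s := by
  rw [subst_X (hasS (const_opt hs hf))]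
  rfl

lemma cf0_eq [Finite ι] (F : PS (Option ι)) : cf 0 F = subst (opt 0 X) F := by
  have h0 : constantCoeff (0 : PS ι) = 0 := map_zero _
  have hX : ∀ i : ι, constantCoeff (X i : PS ι) = 0 := fun i => constantCoeff_X i
  have hs := hasS (const_opt h0 hX)
  conv_rhs => rw [decomp1 F]
  rw [subst_add hs, subst_mul hs, opt_ren h0 hX, opt_t h0 hX, zero_mul, add_zero, subst_self]
  rfl

lemma cf1_eq [Finite ι] (F : PS (Option ι)) : cf 1 F = cf 0 (pderiv ℝ none F) := by
  classical
  ext e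
  rw [coeff_cf, coeff_cf, coeff_pderiv]
  have := optionElim_add e 0 0 1
  rw [add_zero, optionElim_zero, zero_add] at this
  rw [← this, optionElim_apply_none]
  simp

lemma EL [Fintype ι] {F : PS ι} (hF : Conv F) : ∃ H : PS (Option (ι ⊕ ι)), Conv H ∧
    ∀ {σ : Type} [Finite σ] (a v : ι → PS σ) (s : PS σ), (∀ i, constantCoeff (a i) = 0) →
      (∀ i, constantCoeff (v i) = 0) → constantCoeff s = 0 →
      subst (fun k => a k + s * v k) F =
        subst a F + s * ∑ k, v k * subst a (pderiv ℝ k F) + s ^ 2 * subst (opt s (Sum.elim a v)) H := by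
  classical
  set b : ι → PS (Option (ι ⊕ ι)) := fun k => X (some (Sum.inl k)) + X none * X (some (Sum.inr k)) with hb
  have hb0 : ∀ k, constantCoeff (b k) = 0 := by intro k; simp [hb]
  set G := subst b F with hG
  have hGc : Conv G := Conv.subst hb0 (fun k => (Conv.X _).add ((Conv.X _).mul (Conv.X _))) hF
  refine ⟨Sh 2 G, hGc.Sh 2, ?_⟩
  intro σ _ a v s ha hv hs
  have hav := const_elim ha hv
  have hO := const_opt hs hav
  have hOs := hasS hO
  have e1 : subst (opt s (Sum.elim a v)) G = subst (fun k => a k + s * v k) F := by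
    rw [hG, sub_comp hb0 hO]
    congr 1
    funext k
    rw [hb, subst_add hOs, subst_mul hOs, subst_X hOs, subst_X hOs, subst_X hOs]
    rfl
  have h00 : constantCoeff (0 : PS (ι ⊕ ι)) = 0 := map_zero _
  have hX : ∀ i : ι ⊕ ι, constantCoeff (X i : PS (ι ⊕ ι)) = 0 := fun i => constantCoeff_X i
  have hz := const_opt h00 hX
  have hzs := hasS hz
  have e2 : ∀ K : PS ι, cf 0 (subst b K) = subst (fun k => X (Sum.inl k)) K := by
    intro K
    rw [cf0_eq, sub_comp hb0 hz]
    congr 1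
    funext k
    rw [hb, subst_add hzs, subst_mul hzs, subst_X hzs, subst_X hzs, subst_X hzs]
    simp [opt]
  have e3 : cf 1 G = ∑ k, X (Sum.inr k) * subst (fun k => X (Sum.inl k)) (pderiv ℝ k F) := by
    rw [cf1_eq, hG, chain hb0, cf_sum']
    refine Finset.sum_congr rfl fun k _ => ?_
    rw [cf0_eq, subst_mul hzs, ← cf0_eq, ← cf0_eq, e2]
    congr 1
    have : pderiv ℝ none (b k) = X (some (Sum.inr k)) := by
      rw [hb]
      simp only [map_add, Derivation.leibniz, smul_eq_mul]
      rw [pderiv_X_of_ne (by simp), pderiv_X_of_ne (by simp), pderiv_X_self]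
      ring
    rw [this, cf0_eq, subst_X hzs]
    rfl
  have e4 : ∀ K : PS ι, subst (Sum.elim a v) (subst (fun k => X (Sum.inl k) : ι → PS (ι ⊕ ι)) K) = subst a K := by
    intro K
    rw [sub_comp (fun _ => constantCoeff_X _) hav]
    congr 1
    funext k
    rw [subst_X (hasS hav)]
    rfl
  rw [← e1]
  conv_lhs => rw [decomp 2 G]
  rw [Finset.sum_range_succ, Finset.sum_range_one, pow_zero, one_mul, pow_one, subst_add hOs, subst_add hOs,
    subst_mul hOs, subst_mul hOs, subst_pow hOs, opt_t hs hav, opt_ren hs hav, opt_ren hs hav, e2, e4, e3,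
    sub_sum (hasS hav)]
  congr 3
  refine Finset.sum_congr rfl fun k _ => ?_
  rw [subst_mul (hasS hav), e4, subst_X (hasS hav)]
  rfl

lemma cf_ext [Finite τ] [Finite ι] {p : ι → PS τ} (hp : ∀ i, constantCoeff (p i) = 0) (Θ : PS (Option ι)) (j : ℕ) :
    cf j (subst (ext p) Θ) = subst p (cf j Θ) := by
  have hs := hasS (const_ext hp)
  conv_lhs => rw [decomp (j + 1) Θ]
  rw [Finset.sum_range, subst_add hs, ext_gen hp, cf_add,
    cf_gen (fun i : Fin (j + 1) => subst p (cf i Θ)) ⟨j, by omega⟩]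
  have : cf j (subst (ext p) (X none ^ (j + 1) * Sh (j + 1) Θ)) = 0 := by
    ext e
    rw [coeff_cf, subst_mul hs, subst_pow hs, ext_t hp]
    exact X_pow_dvd_iff.1 (Dvd.intro _ rfl) _ (by rw [optionElim_apply_none]; omega)
  rw [this, add_zero]

lemma eq_zero_of_cf {F : PS (Option τ)} (h : ∀ j, cf j F = 0) : F = 0 := by
  ext e
  rw [← optionElim_some e, ← coeff_cf, h, map_zero, map_zero]

/-- shear -/
noncomputable def shr (μ : Option σ → ℝ) : Option σ → PS (Option σ) :=
  fun o => o.elim (C (μ none) * X none) (fun i => X (some i) + C (μ (some i)) * X none)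

lemma const_shr (μ : Option σ → ℝ) (o : Option σ) : constantCoeff (shr μ o) = 0 := by
  rcases o with _ | i <;> simp [shr]

lemma conv_shr (μ : Option σ → ℝ) (o : Option σ) : Conv (shr μ o) := by
  rcases o with _ | i
  · exact (Conv.C _).mul (Conv.X _)
  · exact (Conv.X _).add ((Conv.C _).mul (Conv.X _))

lemma shr_inv [Finite σ] {μ : Option σ → ℝ} (h : μ none ≠ 0) : ∃ ν : Option σ → ℝ,
    (∀ o, subst (shr ν) (shr μ o) = X o) := by
  refine ⟨fun o => o.elim (μ none)⁻¹ (fun i => - μ (some i) * (μ none)⁻¹), ?_⟩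
  set ν : Option σ → ℝ := fun o => o.elim (μ none)⁻¹ (fun i => - μ (some i) * (μ none)⁻¹) with hν
  have hs := hasS (const_shr ν)
  have hC : (C (μ none) : PS (Option σ)) * C (μ none)⁻¹ = 1 := by
    rw [← map_mul, mul_inv_cancel₀ h, map_one]
  rintro (_ | i)
  · have : shr μ (none : Option σ) = C (μ none) * X none := rfl
    rw [this, subst_mul hs, sub_C hs, subst_X hs]
    have : shr ν (none : Option σ) = C (μ none)⁻¹ * X none := rfl
    rw [this, ← mul_assoc, hC, one_mul]
  · have : shr μ (some i) = X (some i) + C (μ (some i)) * X none := rfl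
    rw [this, subst_add hs, subst_mul hs, sub_C hs, subst_X hs, subst_X hs]
    have : shr ν (none : Option σ) = C (μ none)⁻¹ * X none := rfl
    rw [this]
    have : shr ν (some i : Option σ) = X (some i) + C (- μ (some i) * (μ none)⁻¹) * X none := rfl
    rw [this, map_mul, map_neg]
    ring

lemma shear [Finite σ] {G : PS (Option σ)} (hG : G ≠ 0) : ∃ (μ : Option σ → ℝ) (d : ℕ), μ none ≠ 0 ∧
    (∀ k < d, coeff (single none k) (subst (shr μ) G) = 0) ∧ coeff (single none d) (subst (shr μ) G) ≠ 0 := by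
  classical
  cases nonempty_fintype σ
  have hex : ∃ k, G ∉ M1 (k + 1) := by
    by_contra! hc
    exact hG (Mk_all (w := fun _ => 1) fun k => Mk_anti (by omega) (hc k))
  obtain ⟨hk1, hk2⟩ := And.intro (Nat.find_spec hex) (fun m => Nat.find_min hex (m := m))
  set k := Nat.find hex with hk
  have hGk : G ∈ M1 k := by
    rcases Nat.eq_zero_or_pos k with h | h
    · rw [h]; exact Mk_zero _ _
    · have := hk2 (k - 1) (by omega)
      rw [not_not] at this
      rwa [Nat.sub_add_cancel h] at this
  set Q := truncTotal (k + 1) G with hQ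
  have hGQ : G - (Q : PS (Option σ)) ∈ M1 (k + 1) := exists_poly G (k + 1)
  have hQ0 : Q ≠ 0 := by
    intro h
    rw [h] at hGQ
    apply hk1
    simpa using hGQ
  have hdeg : ∀ d ∈ Q.support, degree d = k := by
    intro d hd
    rw [MvPolynomial.mem_support_iff] at hd
    by_contra hne
    apply hd
    rcases lt_or_gt_of_ne hne with h | h
    · rw [hQ, coeff_truncTotal _ (by omega)]
      exact hGk d (by rw [weight_one]; exact h)
    · rw [hQ]
      exact coeff_truncTotal_eq_zero _ (by omega)
  obtain ⟨μ, hμ⟩ : ∃ μ : Option σ → ℝ, MvPolynomial.eval μ (Q * MvPolynomial.X none) ≠ 0 := by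
    by_contra! hc
    have : Q * MvPolynomial.X none = 0 := MvPolynomial.funext (by simpa using hc)
    rcases mul_eq_zero.1 this with h | h
    · exact hQ0 h
    · exact MvPolynomial.X_ne_zero _ h
  rw [map_mul, MvPolynomial.eval_X] at hμ
  have hL := const_shr μ
  refine ⟨μ, k, right_ne_zero_of_mul hμ, ?_, ?_⟩
  · intro j hj
    exact subst_M1 hL hGk _ (by rw [weight_one, degree_single]; exact hj)
  · have h1 := subst_M1 hL hGQ (single none k) (by rw [weight_one, degree_single]; omega)
    rw [subst_sub (hasS hL), map_sub, sub_eq_zero] at h1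
    rw [h1]
    have hb0 : ∀ o : Option σ, constantCoeff (C (μ o) * X none : PS (Option σ)) = 0 := by intro o; simp
    have h2 := subst_congr (w := wo) (k := 1) (hasS hL) (hasS hb0) (by
      rintro (_ | i)
      · simp [shr]
      · have : shr μ (some i) - C (μ (some i)) * X none = X (some i) := by simp [shr]
        rw [this]
        intro e he
        rw [eq_single_of_wo he, coeff_X, if_neg]
        intro h
        have := DFunLike.congr_fun h (some i)
        simp at this) (Q : PS (Option σ)) (single none k) (by rw [weight_wo_none]; omega)
    rw [map_sub, sub_eq_zero] at h2
    rw [h2]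
    have h3 : subst (fun o => C (μ o) * X none : Option σ → PS (Option σ)) (Q : PS (Option σ)) =
        C (MvPolynomial.eval μ Q) * X none ^ k := by
      rw [subst_coe, MvPolynomial.aeval_def, MvPolynomial.eval₂_eq', MvPolynomial.eval_eq', map_sum, Finset.sum_mul]
      refine Finset.sum_congr rfl fun d hd => ?_
      have : degree d = ∑ i, d i := degree_eq_sum d
      simp only [mul_pow, Finset.prod_mul_distrib, Finset.prod_pow_eq_pow_sum, ← this, hdeg d hd]
      rw [map_mul, map_prod]
      simp only [map_pow]
      rw [mul_assoc]
      rfl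
    rw [h3, X_pow_eq, coeff_C_mul, coeff_monomial_same, mul_one]
    exact left_ne_zero_of_mul hμ

end ART


namespace ART
open MvPowerSeries Finsupp
open scoped ENNReal NNReal

variable {σ τ ι κ S : Type} {h : ℕ}

open Classical in
noncomputable def kz {R : Type} [CommRing R] (κ : Fin h → ι) (c : Fin h → R) (k : ι) : R :=
  ∑ j, if κ j = k then c j else 0

lemma kz_sum {R : Type} [CommRing R] [Fintype ι] (κ : Fin h → ι) (c : Fin h → R) (x : ι → R) :
    ∑ k, kz κ c k * x k = ∑ j, c j * x (κ j) := by
  classical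
  unfold kz
  simp only [Finset.sum_mul]
  rw [Finset.sum_comm]
  refine Finset.sum_congr rfl fun j _ => ?_
  simp

lemma kz_sub {a : σ → PS τ} (ha : HasSubst a) (κ : Fin h → ι) (c : Fin h → PS σ) (k : ι) :
    subst a (kz κ c k) = kz κ (fun j => subst a (c j)) k := by
  unfold kz
  rw [sub_sum ha]
  refine Finset.sum_congr rfl fun j _ => ?_
  split_ifs
  · rfl
  · exact sub_zero' ha

noncomputable def Jm (κ : Fin h → ι) (Fs : Fin h → PS ι) (a : ι → PS S) : Matrix (Fin h) (Fin h) (PS S) :=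
  Matrix.of fun i j => subst a (pderiv ℝ (κ j) (Fs i))

noncomputable def dl (κ : Fin h → ι) (Fs : Fin h → PS ι) : PS ι :=
  (Matrix.of fun i j => pderiv ℝ (κ j) (Fs i)).det

lemma det_Jm [Finite ι] (κ : Fin h → ι) (Fs : Fin h → PS ι) {a : ι → PS S} (ha : ∀ i, constantCoeff (a i) = 0) :
    (Jm κ Fs a).det = subst a (dl κ Fs) := by
  rw [dl, sub_det (hasS ha)]; rfl

noncomputable def vv (κ : Fin h → ι) (Fs : Fin h → PS ι) (a : ι → PS S) (A : PS S) (w : ι → PS S) (z : Fin h → PS S)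
    (k : ι) : PS S :=
  A * w k + kz κ (fun j => ∑ i, (Jm κ Fs a).adjugate j i * z i) k

noncomputable def Yc (κ : Fin h → ι) (Fs : Fin h → PS ι) (a : ι → PS S) (t A : PS S) (w : ι → PS S) (z : Fin h → PS S)
    (k : ι) : PS S := a k + t * A * vv κ Fs a A w z k

lemma sub_vv [Finite ι] [Finite σ] {κ : Fin h → ι} {Fs : Fin h → PS ι} {a : ι → PS σ} (ha : ∀ i, constantCoeff (a i) = 0)
    {b : σ → PS τ} (hb : ∀ i, constantCoeff (b i) = 0) (A : PS σ) (w : ι → PS σ) (z : Fin h → PS σ) (k : ι) :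
    subst b (vv κ Fs a A w z k) = vv κ Fs (fun k => subst b (a k)) (subst b A) (fun k => subst b (w k))
      (fun k => subst b (z k)) k := by
  have hs := hasS hb
  unfold vv
  rw [subst_add hs, subst_mul hs, kz_sub hs]
  congr 2
  funext j
  rw [sub_sum hs]
  refine Finset.sum_congr rfl fun i _ => ?_
  rw [subst_mul hs, sub_adj hs]
  congr 3
  ext i j : 2
  simp only [Jm, Matrix.of_apply]
  rw [sub_comp ha hb]

lemma sub_Yc [Finite ι] [Finite σ] {κ : Fin h → ι} {Fs : Fin h → PS ι} {a : ι → PS σ} (ha : ∀ i, constantCoeff (a i) = 0)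
    {b : σ → PS τ} (hb : ∀ i, constantCoeff (b i) = 0) (t A : PS σ) (w : ι → PS σ) (z : Fin h → PS σ) (k : ι) :
    subst b (Yc κ Fs a t A w z k) = Yc κ Fs (fun k => subst b (a k)) (subst b t) (subst b A) (fun k => subst b (w k))
      (fun k => subst b (z k)) k := by
  have hs := hasS hb
  unfold Yc
  rw [subst_add hs, subst_mul hs, subst_mul hs, sub_vv ha hb]

lemma const_vv {κ : Fin h → ι} {Fs : Fin h → PS ι} {a : ι → PS σ} {A : PS σ} {w : ι → PS σ}
    (hw : ∀ k, constantCoeff (w k) = 0) {z : Fin h → PS σ} (hz : ∀ k, constantCoeff (z k) = 0) (k : ι) :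
    constantCoeff (vv κ Fs a A w z k) = 0 := by
  unfold vv kz
  rw [map_add, map_mul, hw, mul_zero, zero_add, map_sum]
  refine Finset.sum_eq_zero fun j _ => ?_
  split_ifs
  · rw [map_sum]
    refine Finset.sum_eq_zero fun i _ => ?_
    rw [map_mul, hz, mul_zero]
  · exact map_zero _

lemma Conv.adj {n : Type} [Fintype n] [DecidableEq n] {M : Matrix n n (PS σ)} (hM : ∀ i j, Conv (M i j)) (i j : n) :
    Conv (M.adjugate i j) := by
  rw [Matrix.adjugate_apply]
  refine Conv.det fun a b => ?_
  rw [Matrix.updateRow_apply]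
  split_ifs
  · rw [Pi.single_apply]; split_ifs
    · exact Conv.one
    · exact Conv.zero
  · exact hM a b

lemma conv_vv [Finite ι] [Finite σ] {κ : Fin h → ι} {Fs : Fin h → PS ι} (hF : ∀ i, Conv (Fs i)) {a : ι → PS σ}
    (ha0 : ∀ i, constantCoeff (a i) = 0) (ha : ∀ i, Conv (a i)) {A : PS σ} (hA : Conv A) {w : ι → PS σ}
    (hw : ∀ k, Conv (w k)) {z : Fin h → PS σ} (hz : ∀ k, Conv (z k)) (k : ι) :
    Conv (vv κ Fs a A w z k) := by
  unfold vv kz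
  refine (hA.mul (hw k)).add (Conv.sum fun j _ => ?_)
  split_ifs
  · refine Conv.sum fun i _ => (Conv.adj (fun a b => ?_) _ _).mul (hz i)
    exact Conv.subst ha0 ha ((hF _).pderiv _)
  · exact Conv.zero

lemma conv_dl [Finite ι] {κ : Fin h → ι} {Fs : Fin h → PS ι} (hF : ∀ i, Conv (Fs i)) : Conv (dl κ Fs) :=
  Conv.det fun i _ => (hF i).pderiv _

lemma vv_sum [Fintype ι] {κ : Fin h → ι} {Fs : Fin h → PS ι} {a : ι → PS σ} (ha : ∀ i, constantCoeff (a i) = 0)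
    (A : PS σ) (w : ι → PS σ) (z : Fin h → PS σ) (i : Fin h) :
    ∑ k, vv κ Fs a A w z k * subst a (pderiv ℝ k (Fs i)) =
      A * ∑ k, subst a (pderiv ℝ k (Fs i)) * w k + subst a (dl κ Fs) * z i := by
  unfold vv
  simp only [add_mul, Finset.sum_add_distrib]
  rw [kz_sum, Finset.mul_sum]
  congr 1
  · refine Finset.sum_congr rfl fun k _ => by ring
  · have h1 : Jm κ Fs a * (Jm κ Fs a).adjugate = (Jm κ Fs a).det • 1 := Matrix.mul_adjugate _
    rw [← det_Jm κ Fs ha]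
    simp only [Finset.sum_mul]
    rw [Finset.sum_comm]
    have h2 : ∀ l, ∑ j, (Jm κ Fs a).adjugate j l * z l * subst a (pderiv ℝ (κ j) (Fs i)) =
        ((Jm κ Fs a * (Jm κ Fs a).adjugate) i l) * z l := by
      intro l
      rw [Matrix.mul_apply, Finset.sum_mul]
      refine Finset.sum_congr rfl fun j _ => ?_
      simp only [Jm, Matrix.of_apply]
      ring
    simp only [h2, h1]
    simp [Matrix.one_apply]

lemma up_Mk [Finite σ] (G : PS σ) :
    subst (fun o => X (Sum.inl o) : σ → PS (σ ⊕ κ)) G - C (constantCoeff G) ∈ Mk wl 1 := by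
  have h1 : G - C (constantCoeff G) ∈ M1 1 := mem_Mk_one_one.2 (by simp)
  have hs : HasSubst (fun o => X (Sum.inl o) : σ → PS (σ ⊕ κ)) := hasS_X _
  have := subst_Mk' (v := fun _ => 1) (w := wl) hs (fun i => ?_) h1
  · rwa [subst_sub hs, sub_C hs] at this
  · classical
    intro e he
    rw [coeff_X, if_neg]
    rintro rfl
    simp [weight_single] at he

lemma X_inl_Mk (o : σ) : (X (Sum.inl o) : PS (σ ⊕ κ)) ∈ Mk wl 1 := by
  classical
  intro e he
  rw [coeff_X, if_neg]
  rintro rfl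
  simp [weight_single] at he

lemma B_exists {π : Type} [Finite π] [Fintype ι] {κ : Fin h → ι} {Fs : Fin h → PS ι} (hF : ∀ i, Conv (Fs i))
    {Y0 : ι → PS (Option π)} (hY0 : ∀ k, constantCoeff (Y0 k) = 0) (hYc : ∀ k, Conv (Y0 k))
    {A U ρ : PS (Option π)} (hA : Conv A) (hU : Conv U) (hδ : subst Y0 (dl κ Fs) = A * U + ρ)
    {Q R : Fin h → PS (Option π)} (hQ : ∀ i, Conv (Q i))
    (hFY : ∀ i, subst Y0 (Fs i) = X none * A ^ 2 * Q i + R i) :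
    ∃ B : Fin h → PS ((Option π ⊕ ι) ⊕ Fin h), (∀ i, Conv (B i)) ∧
      (∀ i, B i - C (constantCoeff (Q i)) - C (constantCoeff U) * X (Sum.inr i) ∈ Mk wl 1) ∧
      ∀ {S : Type} [Finite S] (p : Option π → PS S) (w : ι → PS S) (z : Fin h → PS S),
        (∀ i, constantCoeff (p i) = 0) → (∀ i, constantCoeff (w i) = 0) → (∀ i, constantCoeff (z i) = 0) →
        ∀ i, subst (Yc κ Fs (fun k => subst p (Y0 k)) (p none) (subst p A) w z) (Fs i) =
          subst p (R i) + p none * subst p A * subst p ρ * z i +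
            p none * subst p A ^ 2 * subst (Sum.elim (Sum.elim p w) z) (B i) := by
  choose H hHc hH using fun i => EL (hF i)
  set up : Option π → PS ((Option π ⊕ ι) ⊕ Fin h) := fun o => X (Sum.inl (Sum.inl o)) with hup
  have up0 : ∀ o, constantCoeff (up o) = 0 := fun o => constantCoeff_X _
  have ups := hasS up0
  have upc : ∀ {G : PS (Option π)}, Conv G → Conv (subst up G) := fun hG => Conv.subst up0 (fun _ => Conv.X _) hG
  set Yu : ι → PS ((Option π ⊕ ι) ⊕ Fin h) := fun k => subst up (Y0 k) with hYu
  have Yu0 : ∀ k, constantCoeff (Yu k) = 0 := fun k => (const_sub up0 _).trans (hY0 k)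
  set W : ι → PS ((Option π ⊕ ι) ⊕ Fin h) := fun k => X (Sum.inl (Sum.inr k)) with hW
  set Z : Fin h → PS ((Option π ⊕ ι) ⊕ Fin h) := fun k => X (Sum.inr k) with hZ
  have W0 : ∀ k, constantCoeff (W k) = 0 := fun o => constantCoeff_X _
  have Z0 : ∀ k, constantCoeff (Z k) = 0 := fun o => constantCoeff_X _
  set v := vv κ Fs Yu (subst up A) W Z with hv
  have v0 : ∀ k, constantCoeff (v k) = 0 := const_vv W0 Z0
  set s := X (Sum.inl (Sum.inl none)) * subst up A with hs
  have s0 : constantCoeff s = 0 := by rw [hs, map_mul, constantCoeff_X, zero_mul]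
  have hO := const_opt s0 (const_elim Yu0 v0)
  refine ⟨fun i => subst up (Q i) + ∑ k, subst up (subst Y0 (pderiv ℝ k (Fs i))) * W k + subst up U * Z i +
    X (Sum.inl (Sum.inl none)) * subst (opt s (Sum.elim Yu v)) (H i), ?_, ?_, ?_⟩
  · intro i
    refine ((((upc (hQ i)).add (Conv.sum fun k _ => ?_)).add ((upc hU).mul (Conv.X _))).add ((Conv.X _).mul ?_))
    · exact (upc (Conv.subst hY0 hYc ((hF i).pderiv k))).mul (Conv.X _)
    · refine Conv.subst hO ?_ (hHc i)
      rintro (_ | k | k)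
      · exact (Conv.X _).mul (upc hA)
      · exact upc (hYc k)
      · exact conv_vv hF Yu0 (fun k => upc (hYc k)) (upc hA) (fun _ => Conv.X _) (fun _ => Conv.X _) k
  · intro i
    have upM : ∀ G : PS (Option π), subst up G - C (constantCoeff G) ∈ Mk wl 1 := by
      intro G
      have h1 : G - C (constantCoeff G) ∈ M1 1 := mem_Mk_one_one.2 (by simp)
      have := subst_Mk' (v := fun _ => 1) (w := wl) ups (fun i => X_inl_Mk _) h1
      rwa [subst_sub ups, sub_C ups] at this
    have e : ∀ a b c d e f g : PS ((Option π ⊕ ι) ⊕ Fin h), a + b + c * d + e - f - g * d =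
      (a - f) + b + (c - g) * d + e := by intros; ring
    refine Eq.mp (congrArg (· ∈ Mk wl 1) (e _ _ _ _ _ _ _).symm) ?_
    refine Ideal.add_mem _ (Ideal.add_mem _ (Ideal.add_mem _ (upM _) (Ideal.sum_mem _ fun k _ => ?_)) ?_) ?_
    · exact Ideal.mul_mem_left _ _ (X_inl_Mk _)
    · exact Ideal.mul_mem_right _ _ (upM _)
    · exact Ideal.mul_mem_right _ _ (X_inl_Mk _)
  · intro S _ p w z hp hw hz i
    have hE := const_elim (const_elim hp hw) hz
    have hEs := hasS hE
    have hps := hasS hp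
    have eup : ∀ G : PS (Option π), subst (Sum.elim (Sum.elim p w) z) (subst up G) = subst p G := by
      intro G
      rw [sub_comp up0 hE]
      congr 1
      funext o
      rw [hup, subst_X hEs]
      rfl
    have eW : ∀ k, subst (Sum.elim (Sum.elim p w) z) (W k) = w k := fun k => subst_X hEs _
    have eZ : ∀ k, subst (Sum.elim (Sum.elim p w) z) (Z k) = z k := fun k => subst_X hEs _
    have et : subst (Sum.elim (Sum.elim p w) z) (X (Sum.inl (Sum.inl none)) : PS ((Option π ⊕ ι) ⊕ Fin h)) = p none :=
      subst_X hEs _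
    set a : ι → PS S := fun k => subst p (Y0 k) with ha
    have ha0 : ∀ k, constantCoeff (a k) = 0 := fun k => (const_sub hp _).trans (hY0 k)
    set A' := subst p A with hA'
    have ev : ∀ k, subst (Sum.elim (Sum.elim p w) z) (v k) = vv κ Fs a A' w z k := by
      intro k
      rw [hv, sub_vv Yu0 hE]
      simp only [hYu, eup, eW, eZ]
      rfl
    have eY : ∀ K : PS ι, subst a K = subst p (subst Y0 K) := fun K => (sub_comp hY0 hp K).symm
    have hvv0 := const_vv (κ := κ) (Fs := Fs) (a := a) (A := A') hw hz
    have s0' : constantCoeff (p none * A') = 0 := by rw [map_mul, hp, zero_mul]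
    have key := hH i a (vv κ Fs a A' w z) (p none * A') ha0 hvv0 s0'
    have hYc : Yc κ Fs a (p none) A' w z = fun k => a k + p none * A' * vv κ Fs a A' w z k := rfl
    rw [hYc, key, vv_sum ha0, eY (Fs i), eY (dl κ Fs), hδ, hFY i]
    rw [subst_add hps, subst_add hps, subst_mul hps, subst_mul hps, subst_mul hps, subst_X hps, subst_pow hps]
    rw [subst_add hEs, subst_add hEs, subst_add hEs, subst_mul hEs, subst_mul hEs, sub_sum hEs, et, eup, eup, eZ,
      sub_comp hO hE]
    have e5 : (fun o => subst (Sum.elim (Sum.elim p w) z) (opt s (Sum.elim Yu v) o)) =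
        opt (p none * A') (Sum.elim a (vv κ Fs a A' w z)) := by
      funext o
      rcases o with _ | k | k
      · change subst _ s = p none * A'
        rw [hs, subst_mul hEs, et, eup]
      · change subst _ (Yu k) = a k
        rw [hYu, eup]
      · exact ev k
    rw [e5]
    have e6 : ∀ k, subst (Sum.elim (Sum.elim p w) z) (subst up (subst Y0 (pderiv ℝ k (Fs i))) * W k) =
        subst a (pderiv ℝ k (Fs i)) * w k := by
      intro k
      rw [subst_mul hEs, eup, eW, eY]
    simp only [e6]
    ring

lemma delta_eval {π : Type} [Finite π] [Fintype ι] {κ : Fin h → ι} {Fs : Fin h → PS ι} (hF : ∀ i, Conv (Fs i))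
    {Y0 : ι → PS (Option π)} (hY0 : ∀ k, constantCoeff (Y0 k) = 0)
    {A U ρ : PS (Option π)} (hδ : subst Y0 (dl κ Fs) = A * U + ρ)
    {S : Type} [Finite S] (p : Option π → PS S) (w : ι → PS S) (z : Fin h → PS S)
    (hp : ∀ i, constantCoeff (p i) = 0) (hw : ∀ i, constantCoeff (w i) = 0) (hz : ∀ i, constantCoeff (z i) = 0) :
    ∃ Y, subst (Yc κ Fs (fun k => subst p (Y0 k)) (p none) (subst p A) w z) (dl κ Fs) =
      subst p A * (subst p U + p none * Y) + subst p ρ := by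
  obtain ⟨H, -, hH⟩ := EL (conv_dl (κ := κ) hF)
  set a : ι → PS S := fun k => subst p (Y0 k) with ha
  have ha0 : ∀ k, constantCoeff (a k) = 0 := fun k => (const_sub hp _).trans (hY0 k)
  set A' := subst p A with hA'
  have hps := hasS hp
  have s0' : constantCoeff (p none * A') = 0 := by rw [map_mul, hp, zero_mul]
  have key := hH a (vv κ Fs a A' w z) (p none * A') ha0 (const_vv hw hz) s0'
  have hYc : Yc κ Fs a (p none) A' w z = fun k => a k + p none * A' * vv κ Fs a A' w z k := rfl
  have eY : subst a (dl κ Fs) = subst p (subst Y0 (dl κ Fs)) := (sub_comp hY0 hp _).symm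
  rw [hYc, key, eY, hδ, subst_add hps, subst_mul hps]
  refine ⟨(∑ k, vv κ Fs a A' w z k * subst a (pderiv ℝ k (dl κ Fs))) + p none * A' *
    subst (opt (p none * A') (Sum.elim a (vv κ Fs a A' w z))) H, ?_⟩
  ring

lemma zsol [Finite τ] {B : Fin h → PS (τ ⊕ Fin h)} (hB : ∀ i, Conv (B i)) {u : ℝ} (hu : u ≠ 0)
    (hBM : ∀ i, B i - C u * X (Sum.inr i) ∈ Mk wl 1) :
    ∃ z : Fin h → PS τ, (∀ i, Conv (z i)) ∧ (∀ i, constantCoeff (z i) = 0) ∧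
      ∀ {S : Type} [Finite S] (p : τ → PS S), (∀ i, constantCoeff (p i) = 0) →
        (∀ i, subst (Sum.elim p (fun i => subst p (z i))) (B i) = 0) ∧
        ∀ z' : Fin h → PS S, (∀ i, constantCoeff (z' i) = 0) → (∀ i, subst (Sum.elim p z') (B i) = 0) →
          (fun i => subst p (z i)) = z' := by
  set Ψ : Fin h → PS (τ ⊕ Fin h) := fun i => X (Sum.inr i) - C u⁻¹ * B i with hΨ
  have hCu : (C u⁻¹ : PS (τ ⊕ Fin h)) * C u = 1 := by rw [← map_mul, inv_mul_cancel₀ hu, map_one]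
  have hΨM : ∀ i, Ψ i ∈ Mk wl 1 := by
    intro i
    have : Ψ i = - (C u⁻¹ * (B i - C u * X (Sum.inr i))) := by
      rw [hΨ]; linear_combination (-X (Sum.inr i)) * hCu
    rw [this]
    exact Ideal.neg_mem_iff _ |>.2 (Ideal.mul_mem_left _ _ (hBM i))
  have ev : ∀ {S : Type} [Finite S] (p : τ → PS S) (z : Fin h → PS S), (∀ i, constantCoeff (p i) = 0) →
      (∀ i, constantCoeff (z i) = 0) → ∀ i, subst (Sum.elim p z) (Ψ i) = z i - C u⁻¹ * subst (Sum.elim p z) (B i) := by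
    intro S _ p z hp hz i
    have hs := hasS (const_elim hp hz)
    rw [hΨ, subst_sub hs, subst_mul hs, sub_C hs, subst_X hs]
    rfl
  obtain ⟨z, hzc, hz0, hz⟩ := ift hΨM (fun i => (Conv.X _).sub ((Conv.C _).mul (hB i)))
  refine ⟨z, hzc, hz0, ?_⟩
  intro S _ p hp
  have hz0' : ∀ i, constantCoeff (subst p (z i)) = 0 := fun i => (const_sub hp _).trans (hz0 i)
  have hX : ∀ i : τ, constantCoeff (X i : PS τ) = 0 := fun i => constantCoeff_X i
  have hzp : ∀ i, subst p (z i) = subst (Sum.elim p (fun i => subst p (z i))) (Ψ i) := by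
    intro i
    conv_lhs => rw [hz i]
    rw [sub_comp (const_elim hX hz0) hp]
    congr 1
    funext o
    rcases o with o | o
    · exact subst_X (hasS hp) _
    · rfl
  constructor
  · intro i
    have h1 := hzp i
    rw [ev p _ hp hz0' i] at h1
    have h2 : C u⁻¹ * subst (Sum.elim p (fun i => subst p (z i))) (B i) = 0 := by linear_combination h1
    have hCu : (C u : PS S) * C u⁻¹ = 1 := by rw [← map_mul, mul_inv_cancel₀ hu, map_one]
    calc _ = (C u : PS S) * C u⁻¹ * subst (Sum.elim p (fun i => subst p (z i))) (B i) := by rw [hCu, one_mul]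
      _ = 0 := by rw [mul_assoc, h2, mul_zero]
  · intro z' hz' hz'B
    exact ift_unique hΨM hp hz0' hz' hzp fun i => by rw [ev p z' hp hz' i, hz'B, mul_zero, sub_zero]

end ART


namespace ART
open MvPowerSeries Finsupp
open scoped ENNReal NNReal

variable {σ τ ι κ S : Type} {h : ℕ}

abbrev wr : τ ⊕ κ → ℕ := Sum.elim (fun _ => 0) (fun _ => 1)

lemma wr_one_of_sub [Finite τ] [Finite κ] {G : PS (τ ⊕ κ)}
    (hG : subst (Sum.elim X (fun _ => 0) : τ ⊕ κ → PS τ) G = 0) : G ∈ Mk wr 1 := by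
  classical
  have h0 : ∀ i, constantCoeff ((Sum.elim X (fun _ => 0) : τ ⊕ κ → PS τ) i) = 0 :=
    const_elim (fun _ => constantCoeff_X _) (fun _ => map_zero _)
  set u : τ → PS (τ ⊕ κ) := fun i => X (Sum.inl i) with hu
  have hu0 : ∀ i, constantCoeff (u i) = 0 := fun _ => constantCoeff_X _
  have h1 := congrArg (subst u) hG
  rw [sub_zero' (hasS hu0), sub_comp h0 hu0] at h1
  have h2 : ∀ i, constantCoeff (subst u ((Sum.elim X (fun _ => 0) : τ ⊕ κ → PS τ) i)) = 0 :=
    fun i => (const_sub hu0 _).trans (h0 i)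
  have h3 := subst_congr (w := wr) (k := 1) (a := (X : τ ⊕ κ → PS (τ ⊕ κ))) (hasS fun _ => constantCoeff_X _) (hasS h2)
    (fun i => ?_) G
  · rw [h1, sub_zero, subst_self] at h3
    exact h3
  · rcases i with i | i
    · rw [Sum.elim_inl, subst_X (hasS hu0), hu, sub_self]
      exact Ideal.zero_mem _
    · rw [Sum.elim_inr, sub_zero' (hasS hu0), sub_zero]
      intro e he
      rw [coeff_X, if_neg]
      rintro rfl
      simp [weight_single] at he

lemma wr_succ [Finite τ] [Fintype κ] {G : PS (τ ⊕ κ)} {m : ℕ} (h1 : G ∈ Mk wr 1)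
    (hd : ∀ j, pderiv ℝ (Sum.inr j) G ∈ Mk wr m) : G ∈ Mk wr (m + 1) := by
  classical
  intro e he
  by_cases hz : ∃ j, e (Sum.inr j) ≠ 0
  · obtain ⟨j, hj⟩ := hz
    have hle : single (Sum.inr j) 1 ≤ e := by
      rw [single_le_iff]; omega
    obtain ⟨e', rfl⟩ := exists_add_of_le hle
    rw [map_add, weight_single] at he
    have := hd j e' (by simp at he; omega)
    rw [coeff_pderiv, mul_eq_zero] at this
    rcases this with h | h
    · rwa [add_comm]
    · exact absurd h (by positivity)
  · push Not at hz
    refine h1 e ?_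
    have : weight (wr : τ ⊕ κ → ℕ) e = 0 := by
      rw [weight_apply, Finsupp.sum]
      refine Finset.sum_eq_zero fun i _ => ?_
      rcases i with i | i
      · simp
      · simp [hz i]
    omega

noncomputable def Dd (κ : Fin h → ι) (Fs : Fin h → PS ι) (j : ι) (F : PS ι) : PS ι :=
  (Matrix.of fun a b : Fin (h + 1) => pderiv ℝ ((Fin.cons j κ : Fin (h + 1) → ι) b)
    ((Fin.cons F Fs : Fin (h + 1) → PS ι) a)).det

lemma conv_Dd [Finite ι] {κ : Fin h → ι} {Fs : Fin h → PS ι} (hF : ∀ i, Conv (Fs i)) (j : ι) {F : PS ι} (hf : Conv F) :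
    Conv (Dd κ Fs j F) := by
  refine Conv.det fun a b => ?_
  refine Conv.pderiv ?_ _
  refine Fin.cases ?_ (fun i => ?_) a
  · exact hf
  · exact hF i

lemma cramer0 {R : Type} [CommRing R] [NoZeroDivisors R] {N : Matrix (Fin (h + 1)) (Fin (h + 1)) R} {A u g : R} {c : Fin h → R}
    (hA : A ≠ 0) (h0 : N 0 0 * A + ∑ l, N 0 (Fin.succ l) * c l = g)
    (h1 : ∀ i : Fin h, N i.succ 0 * A + ∑ l, N i.succ (Fin.succ l) * c l = 0)
    (hu : (Matrix.of fun i j : Fin h => N i.succ j.succ).det = A * u) : u * g = N.det := by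
  have h2 : N.adjugate 0 0 = A * u := by
    rw [Matrix.adjugate_fin_succ_eq_det_submatrix, ← hu]
    simp
    rfl
  have h3 : N.mulVec (Fin.cons A c : Fin (h + 1) → R) = Fin.cons g (fun _ => 0) := by
    funext i
    rw [Matrix.mulVec, dotProduct, Fin.sum_univ_succ]
    simp only [Fin.cons_zero, Fin.cons_succ]
    refine Fin.cases ?_ (fun i => ?_) i
    · exact h0
    · exact h1 i
  have h4 : N.adjugate.mulVec (N.mulVec (Fin.cons A c : Fin (h + 1) → R)) = N.det • (Fin.cons A c : Fin (h + 1) → R) := by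
    rw [Matrix.mulVec_mulVec, Matrix.adjugate_mul, Matrix.smul_mulVec, Matrix.one_mulVec]
  have h5 := congrFun h4 0
  rw [h3, Matrix.mulVec, dotProduct, Fin.sum_univ_succ] at h5
  simp only [Fin.cons_zero, Fin.cons_succ, mul_zero, Finset.sum_const_zero, add_zero, Pi.smul_apply, smul_eq_mul, h2] at h5
  have h6 : A * (u * g - N.det) = 0 := by linear_combination h5
  exact sub_eq_zero.1 ((mul_eq_zero.1 h6).resolve_left hA)

open Classical in
lemma fiber [Finite τ] [Fintype ι] {κ : Fin h → ι} {Fs : Fin h → PS ι} (hF : ∀ i, Conv (Fs i))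
    {Y : ι → PS (τ ⊕ ι)} (hY0 : ∀ k, constantCoeff (Y k) = 0) (hFY : ∀ i, subst Y (Fs i) = 0)
    {s A u : PS (τ ⊕ ι)} (hs : s ≠ 0) (hA : A ≠ 0) (hu : constantCoeff u ≠ 0) {c : ι → Fin h → PS (τ ⊕ ι)}
    (hd : ∀ j k, pderiv ℝ (Sum.inr j) (Y k) = s * ((if j = k then A else 0) + kz κ (c j) k))
    (hdl : subst Y (dl κ Fs) = A * u) {y : ι → PS τ} 
    (hYy : ∀ k, subst (Sum.elim X (fun _ => 0) : τ ⊕ ι → PS τ) (Y k) = y k)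
    (hcl : ∀ F, Conv F → subst y F = 0 → ∀ j, subst y (Dd κ Fs j F) = 0) {F : PS ι} (hf : Conv F)
    (hFy : subst y F = 0) : subst Y F = 0 := by
  have hYs := hasS hY0
  set g : ι → PS ι → PS (τ ⊕ ι) := fun j F => subst Y (pderiv ℝ j F) * A + ∑ l, subst Y (pderiv ℝ (κ l) F) * c j l with hg
  have e1 : ∀ j F, pderiv ℝ (Sum.inr j) (subst Y F) = s * g j F := by
    intro j F
    rw [chain hY0]
    simp only [hd, hg, mul_assoc, add_mul, ← Finset.mul_sum, Finset.sum_add_distrib]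
    rw [kz_sum]
    congr 2
    · simp [mul_comm]
    · refine Finset.sum_congr rfl fun l _ => mul_comm _ _
  have e2 : ∀ j i, g j (Fs i) = 0 := by
    intro j i
    have := e1 j (Fs i)
    rw [hFY, map_zero] at this
    exact (mul_eq_zero.1 this.symm).resolve_left hs
  have e3 : ∀ j F, u * g j F = subst Y (Dd κ Fs j F) := by
    intro j F
    rw [Dd, sub_det hYs]
    refine cramer0 (A := A) (c := c j) hA ?_ ?_ ?_
    · rfl
    · intro i; exact e2 j i
    · rw [← hdl, dl, sub_det hYs]; rfl
  have e4 : ∀ F : PS ι, subst (Sum.elim X (fun _ => 0) : τ ⊕ ι → PS τ) (subst Y F) = subst y F := by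
    intro F
    rw [sub_comp hY0 (const_elim (fun _ => constantCoeff_X _) (fun _ => map_zero _))]
    simp only [hYy]
  have huinv : u⁻¹ * u = 1 := MvPowerSeries.inv_mul_cancel u hu
  refine Mk_all (w := wr) fun m => ?_
  induction m generalizing F with
  | zero => exact Mk_zero _ _
  | succ m ih =>
    refine wr_succ (wr_one_of_sub ((e4 F).trans hFy)) fun j => ?_
    have h1 := ih (conv_Dd hF j hf) (hcl F hf hFy j)
    have : pderiv ℝ (Sum.inr j) (subst Y F) = (s * u⁻¹) * subst Y (Dd κ Fs j F) := by
      rw [e1, ← e3]; linear_combination (- s * g j F) * huinv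
    rw [this]
    exact Ideal.mul_mem_left _ _ h1

end ART


namespace ART
open MvPowerSeries Finsupp
open scoped ENNReal NNReal

variable {σ τ ι κ S : Type} {h : ℕ}

lemma vv_zero {κ : Fin h → ι} {Fs : Fin h → PS ι} {a : ι → PS σ} (A : PS σ) (w : ι → PS σ) (k : ι) :
    vv κ Fs a A w (fun _ => 0) k = A * w k := by
  simp [vv, kz]

noncomputable def upl (κ : Type) : τ → PS (τ ⊕ κ) := fun o => X (Sum.inl o)

lemma upl0 (o : τ) : constantCoeff (upl κ o) = 0 := constantCoeff_X _

lemma upl_elim [Finite τ] [Finite κ] {p : τ → PS σ} {w : κ → PS σ} (hp : ∀ i, constantCoeff (p i) = 0)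
    (hw : ∀ i, constantCoeff (w i) = 0) (G : PS τ) :
    subst (Sum.elim p w) (subst (upl κ) G) = subst p G := by
  rw [sub_comp upl0 (const_elim hp hw)]
  congr 1
  funext o
  exact subst_X (hasS (const_elim hp hw)) _

lemma pd_upl [Finite τ] [Finite κ] (G : PS τ) (j : κ) : pderiv ℝ (Sum.inr j) (subst (upl κ) G) = 0 := by
  classical
  cases nonempty_fintype τ
  rw [chain upl0]
  refine Finset.sum_eq_zero fun k _ => ?_
  rw [upl, pderiv_X]
  simp

lemma pd_sum (i : σ) (s : Finset ι) (f : ι → PS σ) : pderiv ℝ i (∑ j ∈ s, f j) = ∑ j ∈ s, pderiv ℝ i (f j) :=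
  map_sum _ _ _

lemma pd_mul (i : σ) (f g : PS σ) : pderiv ℝ i (f * g) = pderiv ℝ i f * g + f * pderiv ℝ i g := by
  rw [Derivation.leibniz]; simp only [smul_eq_mul]; ring

lemma pd_kz {κ : Fin h → ι} {c : Fin h → PS σ} (i : σ) (k : ι) :
    pderiv ℝ i (kz κ c k) = kz κ (fun l => pderiv ℝ i (c l)) k := by
  unfold kz
  rw [pd_sum]
  refine Finset.sum_congr rfl fun l _ => ?_
  split_ifs
  · rfl
  · exact map_zero _

open Classical in
lemma pd_Yc [Finite τ] [Fintype ι] {κ : Fin h → ι} {Fs : Fin h → PS ι} {a : ι → PS τ} (ha : ∀ i, constantCoeff (a i) = 0)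
    (t A : PS τ) (w : ι → PS τ) (z : Fin h → PS (τ ⊕ ι)) (j k : ι) :
    pderiv ℝ (Sum.inr j) (Yc κ Fs (fun k => subst (upl ι) (a k)) (subst (upl ι) t) (subst (upl ι) A)
      (fun k => subst (upl ι) (w k) + X (Sum.inr k)) z k) =
      (subst (upl ι) t * subst (upl ι) A) * ((if j = k then subst (upl ι) A else 0) +
        kz κ (fun l => ∑ i, (Jm κ Fs (fun k => subst (upl ι) (a k))).adjugate l i * pderiv ℝ (Sum.inr j) (z i)) k) := by
  have hadj : ∀ l i, pderiv ℝ (Sum.inr j) ((Jm κ Fs (fun k => subst (upl ι) (a k))).adjugate l i) = 0 := by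
    intro l i
    have : (Jm κ Fs (fun k => subst (upl ι) (a k))) = Matrix.of fun i j => subst (upl ι) (Jm κ Fs a i j) := by
      ext i j : 2
      simp only [Jm, Matrix.of_apply]
      rw [sub_comp ha upl0]
    rw [this, ← sub_adj (hasS upl0), pd_upl]
  have hX : pderiv ℝ (Sum.inr j) (X (Sum.inr k) : PS (τ ⊕ ι)) = if j = k then 1 else 0 := by
    rw [pderiv_X]
    by_cases hjk : j = k
    · simp [hjk]
    · have : ¬ k = j := fun h => hjk h.symm
      simp [hjk, this, Pi.single_apply]
  unfold Yc vv
  rw [map_add, pd_mul, pd_mul, map_add, pd_mul, map_add, pd_upl, pd_upl, pd_upl, pd_upl, pd_kz, hX]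
  have e : ∀ l, pderiv ℝ (Sum.inr j) (∑ i, (Jm κ Fs (fun k => subst (upl ι) (a k))).adjugate l i * z i) =
    ∑ i, (Jm κ Fs (fun k => subst (upl ι) (a k))).adjugate l i * pderiv ℝ (Sum.inr j) (z i) := by
    intro l
    rw [pd_sum]
    refine Finset.sum_congr rfl fun i _ => ?_
    rw [pd_mul, hadj, zero_mul, zero_add]
  simp only [e]
  split_ifs <;> ring

lemma ext_wo [Finite τ] [Finite ι] {p : ι → PS τ} (hp : ∀ i, constantCoeff (p i) = 0) {k : ℕ} {V : PS (Option ι)}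
    (hV : V ∈ Mk wo k) : subst (ext p) V ∈ Mk wo k := by
  refine subst_Mk' (v := wo) (hasS (const_ext hp)) (fun i => ?_) hV
  rcases i with _ | i
  · exact Mk_zero _ _
  · exact ren_Mk (hp i)

end ART


namespace ART
open MvPowerSeries Finsupp
open scoped ENNReal NNReal

variable {σ τ ι κ S : Type} {h : ℕ}

lemma sq_form {d e : ℕ} {V : PS (Option τ)} (hV : V ∈ Mk wo 1) :
    ∃ V2, V2 ∈ Mk wo 1 ∧ (Conv V → Conv V2) ∧ X none ^ e * (X none ^ d + V) ^ 2 = X none ^ (2 * d + e) + V2 := by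
  refine ⟨(2 * X none ^ (d + e) + X none ^ e * V) * V, Ideal.mul_mem_left _ _ hV, fun h => ?_, by ring⟩
  have h2 : Conv (2 : PS (Option τ)) := by
    have := (Conv.one (σ := Option τ)).add Conv.one
    rwa [one_add_one_eq_two] at this
  exact ((h2.mul ((Conv.X _).pow _)).add (((Conv.X _).pow _).mul h)).mul h

set_option maxHeartbeats 1000000 in
lemma core1 {π : Type} [Finite τ] [Finite π] [Fintype ι] {κ : Fin h → ι} {Fs : Fin h → PS ι} (hF : ∀ i, Conv (Fs i))
    {d c : ℕ} {VA : PS (Option π)} (hVA : VA ∈ Mk wo 1) (hVAc : Conv VA) {Y0 : ι → PS (Option π)}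
    (hY0 : ∀ k, constantCoeff (Y0 k) = 0) (hYc : ∀ k, Conv (Y0 k)) {p : π → PS τ} (hp : ∀ i, constantCoeff (p i) = 0)
    {w y : ι → PS (Option τ)} (hw : ∀ i, constantCoeff (w i) = 0) (hwc : ∀ i, w i ∈ M1 c)
    (hy : ∀ k, y k = subst (ext p) (Y0 k) + X none * subst (ext p) (X none ^ d + VA) ^ 2 * w k)
    {E : PS (Option τ)} (hE : constantCoeff E ≠ 0) (hδ : subst y (dl κ Fs) = E * subst (ext p) (X none ^ d + VA))
    (hFy : ∀ i, subst y (Fs i) = 0)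
    (hcl : ∀ F, Conv F → subst y F = 0 → ∀ j, subst y (Dd κ Fs j F) = 0) :
    ∃ Yf : ι → PS (Option π), (∀ k, Conv (Yf k)) ∧ (∀ k, constantCoeff (Yf k) = 0) ∧
      (∀ k, subst (ext p) (Yf k) - y k ∈ M1 c) ∧
      ∀ F, Conv F → subst y F = 0 → subst (ext p) (subst Yf F) = 0 := by
  classical
  have hP := const_ext hp
  have hPs := hasS hP
  have hPt : ext p none = X none := rfl
  set A := X none ^ d + VA with hA
  have hAc : Conv A := ((Conv.X _).pow _).add hVAc
  have hAP : subst (ext p) A = X none ^ d + subst (ext p) VA := by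
    rw [hA, subst_add hPs, subst_pow hPs, subst_X hPs, hPt]
  obtain ⟨U, ρ, hδ0, hρL, hUc, hρc⟩ := wdiv_conv (D := d) hVA hVAc (Conv.subst hY0 hYc (conv_dl (κ := κ) hF))
  rw [← hA] at hδ0
  obtain ⟨V2, hV2, hV2c, hV2e⟩ := sq_form (d := d) (e := 1) hVA
  rw [← hA, pow_one] at hV2e
  choose Q R hFY hRL hQc hRc using fun i => wdiv_conv (D := 2 * d + 1) hV2 (hV2c hVAc) (Conv.subst hY0 hYc (hF i))
  rw [← hV2e] at hFY
  obtain ⟨B, hBc, hBM, hBev⟩ := B_exists hF hY0 hYc hAc hUc hδ0 hQc hFY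
  have h00 : ∀ i : Fin h, constantCoeff (0 : PS (Option τ)) = 0 := fun _ => map_zero _
  -- evaluation at the given solution
  have eYy : (Yc κ Fs (fun k => subst (ext p) (Y0 k)) (ext p none) (subst (ext p) A) w (fun _ => 0)) = y := by
    funext k
    rw [Yc, vv_zero, hy, hPt]; ring
  have eV2 : X none * subst (ext p) A ^ 2 = X none ^ (2 * d + 1) + subst (ext p) V2 := by
    have := congrArg (subst (ext p)) hV2e
    rw [subst_mul hPs, subst_add hPs, subst_pow hPs, subst_pow hPs, subst_X hPs, hPt] at this
    exact this
  have hBR : ∀ i, subst (Sum.elim (Sum.elim (ext p) w) (fun _ => 0)) (B i) = 0 ∧ subst (ext p) (R i) = 0 := by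
    intro i
    have h1 := hBev (ext p) w (fun _ => 0) hP hw h00 i
    rw [eYy, hFy, hPt, eV2] at h1
    refine wdiv_unique (D := 2 * d + 1) (ext_wo hp hV2) ?_ (ext_Low hp (hRL i))
    linear_combination -h1
  obtain ⟨Y, hδe⟩ := delta_eval (κ := κ) hF hY0 hδ0 (ext p) w (fun _ => 0) hP hw h00
  rw [eYy, hδ, hAP, hPt] at hδe
  obtain ⟨hUE, hρ0⟩ := wdiv_unique (D := d) (Q := subst (ext p) U + X none * Y - E) (R := subst (ext p) ρ) (ext_wo hp hVA)
    (by linear_combination -hδe) (ext_Low hp hρL)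
  have hU0 : constantCoeff U ≠ 0 := by
    have h1 := congrArg constantCoeff hUE
    rw [map_sub, map_add, map_mul, constantCoeff_X, zero_mul, add_zero, const_sub hP, map_zero, sub_eq_zero] at h1
    rwa [h1]
  have hQ0 : ∀ i, constantCoeff (Q i) = 0 := by
    intro i
    have h1 := const_zero_of_Mk (hBM i)
    have h2 := const_sub (const_elim (const_elim hP hw) h00) (B i)
    rw [(hBR i).1, map_zero] at h2
    rw [map_sub, map_sub, map_mul, constantCoeff_X, mul_zero, ← h2, constantCoeff_C] at h1
    linarith
  obtain ⟨z, hzc, hz0, hzev⟩ := zsol hBc hU0 (fun i => by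
    have := hBM i
    rwa [hQ0, map_zero, sub_zero] at this)
  -- the family
  set YY : ι → PS (Option π ⊕ ι) := fun k => Yc κ Fs (fun k => subst (upl ι) (Y0 k)) (X (Sum.inl none)) (subst (upl ι) A)
    (fun k => X (Sum.inr k)) z k with hYY
  have YY0 : ∀ k, constantCoeff (YY k) = 0 := by
    intro k
    simp only [hYY, Yc]
    rw [map_add, map_mul, map_mul, constantCoeff_X, zero_mul, zero_mul, add_zero, const_sub upl0, hY0]
  have YYc : ∀ k, Conv (YY k) := by
    intro k
    have cu : ∀ {G : PS (Option π)}, Conv G → Conv (subst (upl ι) G) := fun hG => Conv.subst upl0 (fun _ => Conv.X _) hG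
    refine (cu (hYc k)).add (((Conv.X _).mul (cu hAc)).mul ?_)
    exact conv_vv hF (fun i => (const_sub upl0 _).trans (hY0 i)) (fun i => cu (hYc i)) (cu hAc) (fun _ => Conv.X _) hzc k
  have YYev : ∀ {S : Type} [Finite S] (q : Option π → PS S) (v : ι → PS S), (∀ i, constantCoeff (q i) = 0) →
      (∀ i, constantCoeff (v i) = 0) → ∀ k, subst (Sum.elim q v) (YY k) =
        Yc κ Fs (fun k => subst q (Y0 k)) (q none) (subst q A) v (fun i => subst (Sum.elim q v) (z i)) k := by
    intro S _ q v hq hv k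
    have hs := hasS (const_elim hq hv)
    simp only [hYY]
    rw [sub_Yc (fun i => (const_sub upl0 _).trans (hY0 i)) (const_elim hq hv)]
    simp only [upl_elim hq hv, subst_X hs]
    rfl
  have YYy : ∀ k, subst (Sum.elim (ext p) w) (YY k) = y k := by
    intro k
    rw [YYev _ _ hP hw, (hzev _ (const_elim hP hw)).2 (fun _ => 0) h00 (fun i => (hBR i).1), eYy]
  -- the fiber
  set Pu : Option π → PS (Option τ ⊕ ι) := fun o => subst (upl ι) (ext p o) with hPu
  have Pu0 : ∀ o, constantCoeff (Pu o) = 0 := fun o => (const_sub upl0 _).trans (hP o)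
  have Pus : ∀ G, subst Pu G = subst (upl ι) (subst (ext p) G) := fun G => (sub_comp hP upl0 G).symm
  set wu : ι → PS (Option τ ⊕ ι) := fun k => subst (upl ι) (w k) + X (Sum.inr k) with hwu
  have wu0 : ∀ o, constantCoeff (wu o) = 0 := fun o => by
    rw [hwu, map_add, constantCoeff_X, add_zero]; exact (const_sub upl0 _).trans (hw o)
  set Ys : ι → PS (Option τ ⊕ ι) := fun k => subst (Sum.elim Pu wu) (YY k) with hYs
  have Ys0 : ∀ k, constantCoeff (Ys k) = 0 := fun k => (const_sub (const_elim Pu0 wu0) _).trans (YY0 k)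
  have Ysev : ∀ v : ι → PS (Option τ), (∀ i, constantCoeff (v i) = 0) → ∀ k, subst (Sum.elim X v) (Ys k) =
      subst (Sum.elim (ext p) (fun k => w k + v k)) (YY k) := by
    intro v hv k
    have hXv := const_elim (fun i : Option τ => (constantCoeff_X i : constantCoeff (X i : PS (Option τ)) = 0)) hv
    rw [hYs, sub_comp (const_elim Pu0 wu0) hXv]
    congr 1
    funext o
    have hXu : ∀ G : PS (Option τ), subst (Sum.elim X v) (subst (upl ι) G) = G := fun G => by
      rw [upl_elim (fun i => constantCoeff_X i) hv, subst_self]; rfl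
    rcases o with o | o
    · exact hXu _
    · rw [Sum.elim_inr, Sum.elim_inr, hwu, subst_add (hasS hXv), hXu, subst_X (hasS hXv)]
      rfl
  set zu : Fin h → PS (Option τ ⊕ ι) := fun i => subst (Sum.elim Pu wu) (z i) with hzu
  have zu0 : ∀ i, constantCoeff (zu i) = 0 := fun i => (const_sub (const_elim Pu0 wu0) _).trans (hz0 i)
  have eYs : Ys = Yc κ Fs (fun k => subst Pu (Y0 k)) (Pu none) (subst Pu A) wu zu := by
    funext k
    exact YYev _ _ Pu0 wu0 k
  have eFYs : ∀ i, subst Ys (Fs i) = 0 := by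
    intro i
    rw [eYs, hBev Pu wu zu Pu0 wu0 zu0, (hzev _ (const_elim Pu0 wu0)).1, Pus, (hBR i).2, Pus ρ, hρ0, sub_zero' (hasS upl0)]
    ring
  obtain ⟨Y', hY'⟩ := delta_eval (κ := κ) hF hY0 hδ0 Pu wu zu Pu0 wu0 zu0
  rw [← eYs, Pus ρ, hρ0, sub_zero' (hasS upl0), add_zero] at hY'
  have hA0 : subst Pu A ≠ 0 := by
    intro h0
    have h1 := congrArg (subst (Sum.elim X (fun _ => 0) : Option τ ⊕ ι → PS (Option τ))) h0
    rw [Pus, upl_elim (fun i => constantCoeff_X i) (fun _ => map_zero _), subst_self,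
      sub_zero' (hasS (const_elim (fun i => constantCoeff_X i) (fun _ => map_zero _)))] at h1
    have h2 := (wdiv_unique (D := d) (Q := 1) (R := 0) (ext_wo hp hVA) (by rw [← hAP]; simpa using h1)
      (fun _ _ => map_zero _)).1
    exact one_ne_zero h2
  have key : ∀ F, Conv F → subst y F = 0 → subst Ys F = 0 := by
    intro F hf hfy
    refine fiber (y := y) (A := subst Pu A) (s := Pu none * subst Pu A) (u := subst Pu U + Pu none * Y') hF Ys0 eFYs ?_ hA0 ?_
      (c := fun j l => ∑ i, (Jm κ Fs (fun k => subst Pu (Y0 k))).adjugate l i * pderiv ℝ (Sum.inr j) (zu i)) ?_ hY' ?_ hcl hf hfy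
    · refine mul_ne_zero ?_ hA0
      rw [hPu]
      simp only [hPt]
      rw [subst_X (hasS upl0)]
      intro h0
      have h1 := congrArg (coeff (single (Sum.inl none) 1)) h0
      rw [upl, coeff_X, if_pos rfl, map_zero] at h1
      exact one_ne_zero h1
    · rw [map_add, map_mul, Pu0, zero_mul, add_zero, const_sub Pu0]; exact hU0
    · intro j k
      rw [eYs]
      simp only [Pus]
      rw [hPu, hwu]
      rw [pd_Yc (a := fun k => subst (ext p) (Y0 k)) (fun i => (const_sub hP _).trans (hY0 i))]
    · intro k
      rw [Ysev _ (fun _ => map_zero _)]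
      simp only [add_zero]
      exact YYy k
  have hX0 : ∀ i : Option π, constantCoeff (X i : PS (Option π)) = 0 := fun i => constantCoeff_X i
  have hz' : ∀ i : ι, constantCoeff (0 : PS (Option π)) = 0 := fun _ => map_zero _
  have hz'' : ∀ i : ι, constantCoeff (0 : PS (Option τ)) = 0 := fun _ => map_zero _
  set Yf : ι → PS (Option π) := fun k => subst (Sum.elim X (fun _ => 0)) (YY k) with hYf
  have Yf0 : ∀ k, constantCoeff (Yf k) = 0 := fun k => (const_sub (const_elim hX0 hz') _).trans (YY0 k)
  have PYf : ∀ k, subst (ext p) (Yf k) = subst (Sum.elim (ext p) (fun _ => 0)) (YY k) := by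
    intro k
    rw [hYf, sub_comp (const_elim hX0 hz') hP]
    congr 1
    funext o
    rcases o with o | o
    · exact subst_X hPs _
    · exact sub_zero' hPs
  refine ⟨Yf, ?_, Yf0, ?_, ?_⟩
  · intro k
    refine Conv.subst (const_elim hX0 hz') ?_ (YYc k)
    rintro (o | o)
    · exact Conv.X _
    · exact Conv.zero
  · intro k
    rw [PYf, ← YYy]
    refine subst_congr (hasS (const_elim hP hz'')) (hasS (const_elim hP hw)) ?_ _
    rintro (o | o)
    · simp only [Sum.elim_inl, sub_self]; exact Ideal.zero_mem _
    · simp only [Sum.elim_inr, zero_sub]; exact (Ideal.neg_mem_iff _).2 (hwc o)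
  · intro F hf hfy
    have hneg : ∀ i, constantCoeff (- w i) = 0 := fun i => by rw [map_neg, hw, neg_zero]
    have h1 := congrArg (subst (Sum.elim X (fun i => - w i) : Option τ ⊕ ι → PS (Option τ))) (key F hf hfy)
    have hXn := const_elim (fun i : Option τ => (constantCoeff_X i : constantCoeff (X i : PS (Option τ)) = 0)) hneg
    rw [sub_zero' (hasS hXn), sub_comp Ys0 hXn] at h1
    rw [sub_comp Yf0 hP]
    rw [← h1]
    congr 1
    funext k
    rw [PYf, Ysev _ hneg]
    simp only [add_neg_cancel]

end ART


namespace ART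
open MvPowerSeries Finsupp
open scoped ENNReal NNReal

variable {σ τ ι κ S : Type} {h : ℕ}

def Good (σ : Type) : Prop := ∀ (ι : Type) [Fintype ι] (y : ι → PS σ), (∀ k, constantCoeff (y k) = 0) → ∀ c : ℕ,
  ∃ y1 : ι → PS σ, (∀ k, Conv (y1 k)) ∧ (∀ k, constantCoeff (y1 k) = 0) ∧ (∀ k, y1 k - y k ∈ M1 c) ∧
    ∀ F, Conv F → subst y F = 0 → subst y1 F = 0

lemma core2 [Finite τ] (hG : Good τ) [Fintype ι] {κ : Fin h → ι} {Fs : Fin h → PS ι} (hF : ∀ i, Conv (Fs i))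
    {d : ℕ} {y : ι → PS (Option τ)} (hy0 : ∀ k, constantCoeff (y k) = 0)
    (h0 : ∀ k < d, coeff (single none k) (subst y (dl κ Fs)) = 0) (h1 : coeff (single none d) (subst y (dl κ Fs)) ≠ 0)
    (hFy : ∀ i, subst y (Fs i) = 0)
    (hcl : ∀ F, Conv F → subst y F = 0 → ∀ j, subst y (Dd κ Fs j F) = 0) (c : ℕ) :
    ∃ y1 : ι → PS (Option τ), (∀ k, Conv (y1 k)) ∧ (∀ k, constantCoeff (y1 k) = 0) ∧
    (∀ k, y1 k - y k ∈ M1 (c + 1)) ∧ ∀ F, Conv F → subst y F = 0 → subst y1 F = 0 := by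
  classical
  obtain ⟨a, E, ha, hE, hδ⟩ := wprep h0 h1
  set v := ∑ j : Fin d, X none ^ (j : ℕ) * ren (a j) with hv
  have hvM : v ∈ Mk wo 1 := gen_Mk ha
  obtain ⟨V', hV', -, hVe⟩ := sq_form (d := d) (e := c + 2) hvM
  choose w' y' hyd hyL using fun k => wdiv (D := 2 * d + (c + 2)) hV' (y k)
  set D := 2 * d + (c + 2) with hD
  set p : Fin d ⊕ ι × Fin D → PS τ := Sum.elim a
    (fun kj => cf kj.2 (y' kj.1) - C (constantCoeff (cf kj.2 (y' kj.1)))) with hp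
  have hp0 : ∀ i, constantCoeff (p i) = 0 := const_elim ha (fun kj => by rw [map_sub, constantCoeff_C, sub_self])
  have hps := hasS hp0
  set VA : PS (Option (Fin d ⊕ ι × Fin D)) := ∑ j : Fin d, X none ^ (j : ℕ) * ren (X (Sum.inl j)) with hVA
  set Y0 : ι → PS (Option (Fin d ⊕ ι × Fin D)) := fun k => ∑ j : Fin D, X none ^ (j : ℕ) *
    ren (C (constantCoeff (cf j (y' k))) + X (Sum.inr (k, j))) with hY0
  have eY0 : ∀ k, subst (ext p) (Y0 k) = y' k := by
    intro k
    rw [hY0]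
    simp only
    rw [ext_gen hp0, (hyL k).eq_sum]
    refine Finset.sum_congr rfl fun j _ => ?_
    rw [← (hyL k).eq_sum, subst_add hps, sub_C hps, subst_X hps, hp, Sum.elim_inr]
    congr 2
    ring
  have eVA : subst (ext p) (X none ^ d + VA) = X none ^ d + v := by
    have hs := hasS (const_ext hp0)
    rw [subst_add hs, subst_pow hs, ext_t hp0, hVA, ext_gen hp0, hv]
    congr 1
    refine Finset.sum_congr rfl fun j _ => ?_
    rw [subst_X hps, hp, Sum.elim_inl]
  have y'0 : ∀ k, constantCoeff (y' k) = 0 := by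
    intro k
    have := congrArg constantCoeff (hyd k)
    rw [hy0, map_add, map_mul, map_add, map_pow, constantCoeff_X, const_zero_of_Mk hV', zero_pow (by omega)] at this
    linarith
  have cX : Conv (X none : PS (Option (Fin d ⊕ ι × Fin D))) := Conv.X _
  obtain ⟨Yf, Yfc, Yf0, Yfy, YfF⟩ := core1 (c := c + 1) (VA := VA) (Y0 := Y0) (p := p)
    (w := fun k => X none ^ (c + 1) * w' k) (y := y) (E := E) (d := d) hF
    (gen_Mk fun j => constantCoeff_X _) (Conv.sum fun j _ => (cX.pow _).mul (Conv.X _).ren)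
    (fun k => by rw [← const_sub (const_ext hp0), eY0, y'0])
    (fun k => Conv.sum fun j _ => (cX.pow _).mul (((Conv.C _).add (Conv.X _)).ren))
    hp0 (fun k => by rw [map_mul, map_pow, constantCoeff_X, zero_pow (by omega), zero_mul])
    (fun k => by
      refine Ideal.mul_mem_right _ _ ?_
      clear * -
      induction c with
      | zero => rw [zero_add, pow_one]; exact mem_Mk_one_one.2 (constantCoeff_X _)
      | succ c ih => rw [pow_succ]; exact Mk_mul ih (mem_Mk_one_one.2 (constantCoeff_X _)))
    (fun k => by
      rw [eY0, eVA]
      conv_lhs => rw [hyd k, ← hVe]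
      ring) hE (by rw [eVA]; exact hδ) hFy hcl
  obtain ⟨p1, p1c, p10, p1p, p1F⟩ := hG _ p hp0 (c + 1)
  have hP1 := const_ext p10
  refine ⟨fun k => subst (ext p1) (Yf k), ?_, ?_, ?_, ?_⟩
  · intro k
    refine Conv.subst hP1 ?_ (Yfc k)
    rintro (_ | i)
    · exact Conv.X _
    · exact (p1c i).ren
  · intro k; exact (const_sub hP1 _).trans (Yf0 k)
  · intro k
    have e : subst (ext p1) (Yf k) - y k = (subst (ext p1) (Yf k) - subst (ext p) (Yf k)) + (subst (ext p) (Yf k) - y k) := by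
      ring
    rw [e]
    refine Ideal.add_mem _ (subst_congr (hasS hP1) (hasS (const_ext hp0)) ?_ _) (Yfy k)
    rintro (_ | i)
    · change X none - X none ∈ _
      rw [sub_self]; exact Ideal.zero_mem _
    · change ren (p1 i) - ren (p i) ∈ _
      unfold ren
      rw [← subst_sub (hasS_X _)]
      exact subst_M1 (fun _ => constantCoeff_X _) (p1p i)
  · intro F hf hfy
    rw [← sub_comp Yf0 hP1]
    refine eq_zero_of_cf fun j => ?_
    rw [cf_ext p10]
    refine p1F _ ((Conv.subst Yf0 Yfc hf).cf j) ?_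
    rw [← cf_ext hp0, YfF F hf hfy, cf_zero']

lemma good_option [Finite τ] (hG : Good τ) : Good (Option τ) := by
  classical
  intro ι _ y hy0 c
  set Pr : ℕ → Prop := fun h => ∃ (κ : Fin h → ι) (Fs : Fin h → PS ι), (∀ i, Conv (Fs i) ∧ subst y (Fs i) = 0) ∧
    subst y (dl κ Fs) ≠ 0 with hPr
  have P0 : Pr 0 := by
    refine ⟨Fin.elim0, Fin.elim0, fun i => i.elim0, ?_⟩
    rw [dl, Matrix.det_fin_zero, sub_one' (hasS hy0)]
    exact one_ne_zero
  have Pbd : ¬ Pr (Fintype.card ι + 1) := by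
    rintro ⟨κ, Fs, -, hne⟩
    have : ¬ Function.Injective κ := by
      intro hi
      have := Fintype.card_le_of_injective κ hi
      simp at this
    rw [Function.Injective] at this
    push Not at this
    obtain ⟨i, j, hij, hne'⟩ := this
    apply hne
    rw [dl, Matrix.det_zero_of_column_eq hne' (fun k => by simp [hij]), sub_zero' (hasS hy0)]
  obtain ⟨h, ⟨κ, Fs, hFs, hne⟩, hmax⟩ : ∃ h, Pr h ∧ ¬ Pr (h + 1) := by
    by_contra! hc
    have : ∀ h, Pr h := fun h => by
      induction h with
      | zero => exact P0
      | succ n ih => exact hc n ih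
    exact Pbd (this _)
  have hcl : ∀ F, Conv F → subst y F = 0 → ∀ j, subst y (Dd κ Fs j F) = 0 := by
    intro F hf hfy j
    by_contra hne
    refine hmax ⟨Fin.cons j κ, Fin.cons F Fs, fun i => ?_, hne⟩
    refine Fin.cases ?_ (fun i => ?_) i
    · exact ⟨hf, hfy⟩
    · exact hFs i
  obtain ⟨μ, d, hμ, hd0, hd1⟩ := shear hne
  obtain ⟨ν, hν⟩ := shr_inv hμ
  have hs := hasS (const_shr μ)
  have hs' := hasS (const_shr ν)
  have eνμ : ∀ G : PS (Option τ), subst (shr ν) (subst (shr μ) G) = G := by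
    intro G
    rw [sub_comp (const_shr μ) (const_shr ν)]
    simp only [hν]
    rw [subst_self]; rfl
  set y' : ι → PS (Option τ) := fun k => subst (shr μ) (y k) with hy'
  have y'0 : ∀ k, constantCoeff (y' k) = 0 := fun k => (const_sub (const_shr μ) _).trans (hy0 k)
  have ey' : ∀ G : PS ι, subst y' G = subst (shr μ) (subst y G) := fun G => (sub_comp hy0 (const_shr μ) G).symm
  have ez : ∀ G : PS ι, subst y' G = 0 ↔ subst y G = 0 := by
    intro G
    rw [ey']
    constructor
    · intro h
      rw [← eνμ (subst y G), h, sub_zero' hs']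
    · intro h
      rw [h, sub_zero' hs]
  obtain ⟨y1, y1c, y10, y1y, y1F⟩ := core2 hG (κ := κ) (fun i => (hFs i).1) y'0 (d := d) (by rw [ey']; exact hd0)
    (by rw [ey']; exact hd1) (fun i => (ez _).2 (hFs i).2) (fun F hf hfy j => (ez _).2 (hcl F hf ((ez _).1 hfy) j)) c
  refine ⟨fun k => subst (shr ν) (y1 k), ?_, ?_, ?_, ?_⟩
  · intro k; exact Conv.subst (const_shr ν) (conv_shr ν) (y1c k)
  · intro k; exact (const_sub (const_shr ν) _).trans (y10 k)
  · intro k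
    have e : subst (shr ν) (y1 k) - y k = subst (shr ν) (y1 k - y' k) := by
      rw [subst_sub hs', hy', eνμ]
    rw [e]
    exact Mk_anti (Nat.le_succ c) (subst_M1 (const_shr ν) (y1y k))
  · intro F hf hfy
    rw [← sub_comp y10 (const_shr ν), y1F F hf ((ez F).2 hfy), sub_zero' hs']

lemma good_equiv [Finite σ] [Finite τ] (e : σ ≃ τ) (hG : Good σ) : Good τ := by
  intro ι _ y hy0 c
  set u : τ → PS σ := fun i => X (e.symm i) with hu
  set v : σ → PS τ := fun i => X (e i) with hv
  have u0 : ∀ i, constantCoeff (u i) = 0 := fun _ => constantCoeff_X _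
  have v0 : ∀ i, constantCoeff (v i) = 0 := fun _ => constantCoeff_X _
  have evu : ∀ G : PS τ, subst v (subst u G) = G := by
    intro G
    rw [sub_comp u0 v0]
    simp only [hu, subst_X (hasS v0)]
    simp only [hv, Equiv.apply_symm_apply]
    rw [subst_self]; rfl
  have ey : ∀ F : PS ι, subst (fun k => subst u (y k)) F = subst u (subst y F) := fun F => (sub_comp hy0 u0 F).symm
  obtain ⟨y1, y1c, y10, y1y, y1F⟩ := hG ι (fun k => subst u (y k)) (fun k => (const_sub u0 _).trans (hy0 k)) c
  refine ⟨fun k => subst v (y1 k), ?_, ?_, ?_, ?_⟩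
  · intro k; exact Conv.subst v0 (fun _ => Conv.X _) (y1c k)
  · intro k; exact (const_sub v0 _).trans (y10 k)
  · intro k
    have e : subst v (y1 k) - y k = subst v (y1 k - subst u (y k)) := by
      rw [subst_sub (hasS v0), evu]
    rw [e]
    exact subst_M1 v0 (y1y k)
  · intro F hf hfy
    rw [← sub_comp y10 v0, y1F F hf (by rw [ey, hfy, sub_zero' (hasS u0)]), sub_zero' (hasS v0)]

lemma good_empty : Good PEmpty := by
  intro ι _ y hy0 c
  have : ∀ k, y k = 0 := by
    intro k
    ext e
    rw [Subsingleton.elim e 0, coeff_zero_eq_constantCoeff_apply, hy0, map_zero]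
  refine ⟨y, fun k => by rw [this]; exact Conv.zero, hy0, fun k => by rw [sub_self]; exact Ideal.zero_mem _,
    fun F _ h => h⟩

theorem good_all (σ : Type) [Finite σ] : Good σ := by
  have := Finite.induction_empty_option (P := fun σ : Type => Finite σ ∧ Good σ)
    (fun {α β} e h => ⟨@Finite.of_equiv _ _ h.1 e, @good_equiv _ _ h.1 (@Finite.of_equiv _ _ h.1 e) e h.2⟩)
    ⟨inferInstance, good_empty⟩ (fun {α} _ h => ⟨inferInstance, good_option h.2⟩) σ
  exact this.2

end ART


namespace ART
open MvPowerSeries Finsupp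
open scoped ENNReal NNReal Topology

section
open Asymptotics Filter

variable {σ ι : Type} [Fintype σ] [Fintype ι]

lemma coe_sub' (p q : MvPolynomial σ ℝ) : ((p - q : MvPolynomial σ ℝ) : PS σ) = p - q := by
  ext e; simp

lemma pow_bigO {k l : ℕ} (h : k ≤ l) : (fun x : σ → ℝ => ‖x‖ ^ l) =O[𝓝 0] fun x => ‖x‖ ^ k := by
  refine IsBigO.of_bound 1 ?_
  filter_upwards [Metric.ball_mem_nhds (0 : σ → ℝ) one_pos] with x hx
  rw [mem_ball_zero_iff] at hx
  rw [norm_pow, norm_pow, norm_norm, one_mul]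
  exact pow_le_pow_of_le_one (norm_nonneg _) hx.le h

lemma one_bigO_aux (k : ℕ) : (fun x : σ → ℝ => ‖x‖ ^ k) =O[𝓝 0] fun _ => (1 : ℝ) := by
  have := pow_bigO (σ := σ) (Nat.zero_le k)
  simpa using this

lemma K1 {p : MvPolynomial σ ℝ} {k : ℕ} (hp : (p : PS σ) ∈ M1 k) :
    (fun x : σ → ℝ => MvPolynomial.eval x p) =O[𝓝 0] fun x => ‖x‖ ^ k := by
  classical
  simp only [MvPolynomial.eval_eq']
  refine IsBigO.fun_sum fun e he => ?_
  have hk : k ≤ degree e := by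
    by_contra hlt
    have := hp e (by rw [weight_one]; omega)
    rw [MvPolynomial.coeff_coe] at this
    exact (MvPolynomial.mem_support_iff.1 he) this
  refine IsBigO.trans ?_ (pow_bigO hk)
  refine IsBigO.of_bound |MvPolynomial.coeff e p| (Eventually.of_forall fun x => ?_)
  rw [norm_mul, Real.norm_eq_abs, norm_prod, norm_pow, norm_norm, degree_eq_sum, ← Finset.prod_pow_eq_pow_sum]
  gcongr with i hi
  · rw [norm_pow]
    gcongr
    exact norm_le_pi_norm x i

lemma K2 {p : MvPolynomial σ ℝ} {k : ℕ} 
    (h : (fun x : σ → ℝ => MvPolynomial.eval x p) =O[𝓝 0] fun x => ‖x‖ ^ k) : (p : PS σ) ∈ M1 k := by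
  classical
  have key : ∀ j ≤ k, (p : PS σ) ∈ M1 j := by
    intro j
    induction j with
    | zero => intro _; exact Mk_zero _ _
    | succ j ih =>
      intro hj
      have hpj := ih (by omega)
      set q := MvPolynomial.homogeneousComponent j p with hq
      have hd : ((p - q : MvPolynomial σ ℝ) : PS σ) ∈ M1 (j + 1) := by
        intro e he
        rw [weight_one] at he
        rw [MvPolynomial.coeff_coe, MvPolynomial.coeff_sub, hq, MvPolynomial.coeff_homogeneousComponent]
        split_ifs with h1
        · simp
        · rw [sub_zero, ← MvPolynomial.coeff_coe]
          exact hpj e (by rw [weight_one]; omega)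
      have hO : (fun x : σ → ℝ => MvPolynomial.eval x q) =O[𝓝 0] fun x => ‖x‖ ^ (j + 1) := by
        have := (h.trans (pow_bigO hj)).sub (K1 hd)
        refine this.congr_left fun x => ?_
        simp
      have q0 : q = 0 := by
        refine MvPolynomial.funext fun x => ?_
        rw [map_zero]
        have hhom : ∀ t : ℝ, MvPolynomial.eval (t • x) q = t ^ j * MvPolynomial.eval x q := by
          intro t
          rw [MvPolynomial.eval_eq', MvPolynomial.eval_eq', Finset.mul_sum]
          refine Finset.sum_congr rfl fun e he => ?_
          have hde : degree e = j := by
            have := MvPolynomial.homogeneousComponent_isHomogeneous j p (MvPolynomial.mem_support_iff.1 he)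
            rw [← weight_one]; exact this
          simp only [Pi.smul_apply, smul_eq_mul, mul_pow, Finset.prod_mul_distrib]
          rw [Finset.prod_pow_eq_pow_sum, ← degree_eq_sum, hde]
          ring
        have ht : Tendsto (fun t : ℝ => t • x) (𝓝 0) (𝓝 0) := by
          have : Continuous fun t : ℝ => t • x := by fun_prop
          simpa using this.tendsto 0
        have h2 := hO.comp_tendsto ht
        have h3 : (fun t : ℝ => t ^ j * MvPolynomial.eval x q) =O[𝓝 0] fun t => t ^ (j+1) := by
          refine IsBigO.trans (h2.congr_left fun t => hhom t) ?_
          refine IsBigO.of_bound (‖x‖ ^ (j+1)) (Eventually.of_forall fun t => ?_)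
          simp only [Function.comp, norm_smul, mul_pow, norm_mul, norm_pow, norm_norm]
          rw [mul_comm]
        obtain ⟨C, hC⟩ := h3.bound
        by_contra hne
        have h4 : ∀ᶠ t : ℝ in 𝓝[≠] 0, |MvPolynomial.eval x q| ≤ C * |t| := by
          filter_upwards [hC.filter_mono nhdsWithin_le_nhds, self_mem_nhdsWithin] with t ht1 ht2
          rw [norm_mul, norm_pow, norm_pow, pow_succ, Real.norm_eq_abs, Real.norm_eq_abs] at ht1
          have : 0 < |t| ^ j := pow_pos (abs_pos.2 ht2) _
          nlinarith
        have h5 : Tendsto (fun t : ℝ => C * |t|) (𝓝[≠] 0) (𝓝 0) := by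
          have : Continuous fun t : ℝ => C * |t| := by fun_prop
          have := (this.tendsto 0).mono_left (nhdsWithin_le_nhds (s := {0}ᶜ))
          simpa using this
        have := ge_of_tendsto h5 h4
        exact hne (abs_nonpos_iff.1 this)
      rw [q0, sub_zero] at hd
      exact hd
  exact key k le_rfl

def Rep (u : (σ → ℝ) → ℝ) (F : PS σ) : Prop := ∀ k : ℕ, ∃ p : MvPolynomial σ ℝ, F - (p : PS σ) ∈ M1 k ∧
  (fun x => u x - MvPolynomial.eval x p) =O[𝓝 0] fun x => ‖x‖ ^ k

lemma Rep.of_ge {u : (σ → ℝ) → ℝ} {F : PS σ} (h : ∀ k : ℕ, 1 ≤ k → ∃ p : MvPolynomial σ ℝ, F - (p : PS σ) ∈ M1 k ∧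
  (fun x => u x - MvPolynomial.eval x p) =O[𝓝 0] fun x => ‖x‖ ^ k) : Rep u F := by
  intro k
  obtain ⟨p, h1, h2⟩ := h (k + 1) (by omega)
  exact ⟨p, Mk_anti (Nat.le_succ k) h1, h2.trans (pow_bigO (Nat.le_succ k))⟩

lemma Rep.poly {u : (σ → ℝ) → ℝ} {F : PS σ} (h : Rep u F) {k : ℕ} {p : MvPolynomial σ ℝ} (hp : F - (p : PS σ) ∈ M1 k) :
    (fun x => u x - MvPolynomial.eval x p) =O[𝓝 0] fun x => ‖x‖ ^ k := by
  obtain ⟨q, h1, h2⟩ := h k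
  have : ((q - p : MvPolynomial σ ℝ) : PS σ) ∈ M1 k := by
    have := Ideal.sub_mem _ hp h1
    rwa [show F - (p : PS σ) - (F - q) = ((q - p : MvPolynomial σ ℝ) : PS σ) by
      rw [coe_sub']; ring] at this
  refine (h2.add (K1 this)).congr_left fun x => ?_
  simp

lemma Rep.unique {u v : (σ → ℝ) → ℝ} {F G : PS σ} (hF : Rep u F) (hG : Rep v G) (huv : u =ᶠ[𝓝 0] v) : F = G := by
  rw [← sub_eq_zero]
  refine Mk_all (w := fun _ => 1) fun k => ?_
  obtain ⟨p, p1, p2⟩ := hF k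
  obtain ⟨q, q1, q2⟩ := hG k
  have h1 : (fun x : σ → ℝ => MvPolynomial.eval x (p - q)) =O[𝓝 0] fun x => ‖x‖ ^ k := by
    refine (q2.sub p2).congr' ?_ EventuallyEq.rfl
    filter_upwards [huv] with x hx
    rw [hx]; simp
  have h2 := K2 h1
  have := Ideal.add_mem _ (Ideal.sub_mem _ p1 q1) h2
  rwa [show F - (p : PS σ) - (G - q) + ((p - q : MvPolynomial σ ℝ) : PS σ) = F - G by
      rw [coe_sub']; ring] at this

lemma Rep.sub {u v : (σ → ℝ) → ℝ} {F G : PS σ} (hF : Rep u F) (hG : Rep v G) :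
    Rep (fun x => u x - v x) (F - G) := by
  intro k
  obtain ⟨p, p1, p2⟩ := hF k
  obtain ⟨q, q1, q2⟩ := hG k
  refine ⟨p - q, ?_, ?_⟩
  · have := Ideal.sub_mem _ p1 q1
    rwa [show F - (p : PS σ) - (G - q) = F - G - ((p - q : MvPolynomial σ ℝ) : PS σ) by
      rw [coe_sub']; ring] at this
  · refine (p2.sub q2).congr_left fun x => ?_
    simp; ring

lemma Rep.zero : Rep (fun _ : σ → ℝ => 0) 0 := by
  intro k
  refine ⟨0, by simp, ?_⟩
  simpa using isBigO_zero _ _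

lemma Rep.X (i : σ) : Rep (fun x : σ → ℝ => x i) (X i) := by
  intro k
  refine ⟨MvPolynomial.X i, by simp, ?_⟩
  simpa using isBigO_zero _ _

lemma Rep.const {u : (σ → ℝ) → ℝ} {F : PS σ} (h : Rep u F) : u 0 = constantCoeff F := by
  obtain ⟨p, h1, h2⟩ := h 1
  have h3 := mem_Mk_one_one.1 h1
  obtain ⟨C, hC⟩ := h2.bound
  have h4 := hC.self_of_nhds
  simp only [norm_zero, pow_one, mul_zero, norm_le_zero_iff] at h4
  rw [map_sub] at h3
  have h5 : MvPolynomial.eval (0 : σ → ℝ) p = constantCoeff (p : PS σ) := by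
    rw [← coeff_zero_eq_constantCoeff_apply, MvPolynomial.coeff_coe, ← MvPolynomial.constantCoeff_eq,
      MvPolynomial.constantCoeff_eq]
    rw [MvPolynomial.eval_zero, MvPolynomial.constantCoeff_eq]
  linarith

lemma Rep.bigO {u : (σ → ℝ) → ℝ} {F : PS σ} (h : Rep u F) (h0 : constantCoeff F = 0) :
    u =O[𝓝 0] fun x => ‖x‖ := by
  have := h.poly (k := 1) (p := 0) (by simpa using mem_Mk_one_one.2 h0)
  simpa using this

lemma eval_congr {k : ℕ} {a b : ι → (σ → ℝ) → ℝ} (ha : ∀ i, a i =O[𝓝 0] fun _ => (1 : ℝ))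
    (hb : ∀ i, b i =O[𝓝 0] fun _ => (1 : ℝ)) (hab : ∀ i, (fun x => a i x - b i x) =O[𝓝 0] fun x => ‖x‖ ^ k)
    (p : MvPolynomial ι ℝ) :
    (fun x => MvPolynomial.eval (fun i => a i x) p - MvPolynomial.eval (fun i => b i x) p) =O[𝓝 0] fun x => ‖x‖ ^ k := by
  suffices H : ((fun x => MvPolynomial.eval (fun i => a i x) p - MvPolynomial.eval (fun i => b i x) p) =O[𝓝 0] fun x => ‖x‖ ^ k)
      ∧ ((fun x => MvPolynomial.eval (fun i => a i x) p) =O[𝓝 0] fun _ => (1:ℝ)) ∧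
      ((fun x => MvPolynomial.eval (fun i => b i x) p) =O[𝓝 0] fun _ => (1:ℝ)) from H.1
  induction p using MvPolynomial.induction_on with
  | C r =>
    simp only [MvPolynomial.eval_C, sub_self]
    exact ⟨isBigO_zero _ _, isBigO_const_const _ one_ne_zero _, isBigO_const_const _ one_ne_zero _⟩
  | add p q hp hq =>
    refine ⟨(hp.1.add hq.1).congr_left fun x => by simp; ring, ?_, ?_⟩
    · simpa using hp.2.1.add hq.2.1
    · simpa using hp.2.2.add hq.2.2
  | mul_X p i hp =>
    refine ⟨?_, ?_, ?_⟩
    · have h1 := hp.1.mul (ha i)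
      have h2 := hp.2.2.mul (hab i)
      simp only [mul_one, one_mul] at h1 h2
      exact (h1.add h2).congr_left fun x => by simp; ring
    · simpa using hp.2.1.mul (ha i)
    · simpa using hp.2.2.mul (hb i)

lemma aeval_coe (pT : ι → MvPolynomial σ ℝ) (p : MvPolynomial ι ℝ) :
    MvPolynomial.aeval (fun i => (pT i : PS σ)) p = (MvPolynomial.bind₁ pT p : MvPolynomial σ ℝ) := by
  induction p using MvPolynomial.induction_on with
  | C r => simp [MvPowerSeries.algebraMap_apply]
  | add p q hp hq => simp [hp, hq]
  | mul_X p i hp => simp [hp]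

lemma Rep.comp {f : (ι → ℝ) → ℝ} {F : PS ι} (hf : Rep f F) {t : ι → (σ → ℝ) → ℝ} {T : ι → PS σ}
    (ht : ∀ i, Rep (t i) (T i)) (hT : ∀ i, constantCoeff (T i) = 0) :
    Rep (fun x => f (fun i => t i x)) (subst T F) := by
  refine Rep.of_ge fun k hk => ?_
  obtain ⟨pF, f1, f2⟩ := hf k
  choose pT t1 t2 using fun i => ht i k
  have hpT : ∀ i, constantCoeff (pT i : PS σ) = 0 := by
    intro i
    have := mem_Mk_one_one.1 (Mk_anti hk (t1 i))
    rw [map_sub, hT i] at this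
    linarith
  have htO : ∀ i, t i =O[𝓝 0] fun x => ‖x‖ := fun i => (ht i).bigO (hT i)
  have ht1 : ∀ i, t i =O[𝓝 0] fun _ => (1:ℝ) := fun i => by
    have := one_bigO_aux (σ := σ) 1
    simp only [pow_one] at this
    exact (htO i).trans this
  refine ⟨MvPolynomial.bind₁ pT pF, ?_, ?_⟩
  · have h1 := subst_M1 hT f1
    have h2 := subst_congr (hasS hT) (hasS hpT) t1 (pF : PS ι)
    have h3 : subst (fun i => (pT i : PS σ)) (pF : PS ι) = (MvPolynomial.bind₁ pT pF : MvPolynomial σ ℝ) := by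
      rw [subst_coe]
      exact aeval_coe pT pF
    rw [h3] at h2
    have := Ideal.add_mem _ h1 h2
    rwa [subst_sub (hasS hT), sub_add_sub_cancel] at this
  · have h1 : Tendsto (fun x i => t i x) (𝓝 0) (𝓝 (0 : ι → ℝ)) := by
      rw [tendsto_pi_nhds]
      intro i
      refine (htO i).trans_tendsto ?_
      have : Continuous fun x : σ → ℝ => ‖x‖ := continuous_norm
      simpa using this.tendsto 0
    have h2 := f2.comp_tendsto h1
    have h3 : (fun x => fun i => t i x) =O[𝓝 0] fun x : σ → ℝ => ‖x‖ := isBigO_pi.2 htO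
    have h4 := h2.trans (h3.norm_left.pow k)
    have h5 : ∀ i, (fun x => MvPolynomial.eval x (pT i)) =O[𝓝 0] fun _ => (1:ℝ) := by
      intro i
      have h6 := (ht1 i).sub ((t2 i).trans (one_bigO_aux k))
      exact h6.congr_left fun x => by ring
    have h6 := eval_congr ht1 h5 t2 pF
    refine (h4.add h6).congr_left fun x => ?_
    simp only [Function.comp, sub_add_sub_cancel]
    congr 1
    exact (MvPolynomial.eval₂Hom_bind₁ (RingHom.id ℝ) x pT pF).symm

end
end ART


namespace ART
open MvPowerSeries Finsupp
open scoped ENNReal NNReal Topology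

section
open Asymptotics Filter

variable {σ ι : Type} [Fintype σ] [Fintype ι]

noncomputable def FQ (q : ℕ → MvPolynomial σ ℝ) : PS σ := fun e => MvPolynomial.coeff e (q (degree e))

lemma coeff_FQ (q : ℕ → MvPolynomial σ ℝ) (e : σ →₀ ℕ) : coeff e (FQ q) = MvPolynomial.coeff e (q (degree e)) := rfl

lemma hom_coeff {q : MvPolynomial σ ℝ} {i : ℕ} (hq : q.IsHomogeneous i) {e : σ →₀ ℕ} (h : degree e ≠ i) :
    MvPolynomial.coeff e q = 0 := by
  by_contra hne
  have := hq hne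
  exact h (by rw [← weight_one]; exact this)

lemma rep_FQ {u : (σ → ℝ) → ℝ} {q : ℕ → MvPolynomial σ ℝ} (hq : ∀ i, (q i).IsHomogeneous i)
    (hu : ∀ k, (fun x => u x - ∑ i ∈ Finset.range k, MvPolynomial.eval x (q i)) =O[𝓝 0] fun x => ‖x‖ ^ k) :
    Rep u (FQ q) := by
  intro k
  refine ⟨∑ i ∈ Finset.range k, q i, ?_, by simpa using hu k⟩
  intro e he
  rw [weight_one] at he
  rw [map_sub, coeff_FQ, MvPolynomial.coeff_coe, MvPolynomial.coeff_sum, Finset.sum_eq_single (degree e), sub_self]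
  · intro b _ hb
    exact hom_coeff (hq b) hb.symm
  · intro h; exact absurd (Finset.mem_range.2 he) h

lemma nrm_FQ (q : ℕ → MvPolynomial σ ℝ) (r : σ → ℝ≥0) : nrm r (FQ q) ≤ ∑' i, nrm r (q i : PS σ) := by
  unfold nrm
  rw [ENNReal.tsum_comm]
  refine ENNReal.tsum_le_tsum fun e => ?_
  refine le_trans ?_ (ENNReal.le_tsum (degree e))
  rw [coeff_FQ, MvPolynomial.coeff_coe]

lemma nrm_sum_le (r : σ → ℝ≥0) (s : Finset ι) (F : ι → PS σ) : nrm r (∑ i ∈ s, F i) ≤ ∑ i ∈ s, nrm r (F i) := by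
  classical
  induction s using Finset.induction_on with
  | empty => simp [nrm_zero]
  | insert a s ha ih =>
    rw [Finset.sum_insert ha, Finset.sum_insert ha]
    exact (nrm_add_le _ _ _).trans (by gcongr)

noncomputable def qp (p : FormalMultilinearSeries ℝ (σ → ℝ) ℝ) (i : ℕ) : MvPolynomial σ ℝ := by
  classical
  exact ∑ r : Fin i → σ, MvPolynomial.C (p i fun j => Pi.single (r j) 1) * ∏ j, MvPolynomial.X (r j)

lemma qp_hom (p : FormalMultilinearSeries ℝ (σ → ℝ) ℝ) (i : ℕ) : (qp p i).IsHomogeneous i := by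
  classical
  unfold qp
  refine MvPolynomial.IsHomogeneous.sum _ _ _ fun r _ => ?_
  have h2 := MvPolynomial.IsHomogeneous.prod Finset.univ (fun j : Fin i => (MvPolynomial.X (r j) : MvPolynomial σ ℝ)) (fun _ => 1)
    (fun j _ => MvPolynomial.isHomogeneous_X _ _)
  have := (MvPolynomial.isHomogeneous_C σ (p i fun j => Pi.single (r j) 1)).mul h2
  simpa using this

lemma qp_eval (p : FormalMultilinearSeries ℝ (σ → ℝ) ℝ) (i : ℕ) (x : σ → ℝ) :
    MvPolynomial.eval x (qp p i) = p i fun _ => x := by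
  classical
  have h : (fun _ : Fin i => x) = fun _ => ∑ s, x s • (Pi.single s 1 : σ → ℝ) := by
    funext j
    rw [← pi_eq_sum_univ']
  rw [h, ContinuousMultilinearMap.map_sum]
  unfold qp
  simp only [map_sum, map_mul, MvPolynomial.eval_C, map_prod, MvPolynomial.eval_X, ContinuousMultilinearMap.map_smul_univ, smul_eq_mul]
  exact Finset.sum_congr rfl fun r _ => mul_comm _ _

lemma qp_nrm (p : FormalMultilinearSeries ℝ (σ → ℝ) ℝ) (i : ℕ) (ρ : ℝ≥0) :
    nrm (fun _ => ρ) (qp p i : PS σ) ≤ (((Fintype.card σ * ρ) ^ i * ‖p i‖₊ : ℝ≥0) : ℝ≥0∞) := by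
  classical
  have : (qp p i : PS σ) = ∑ r : Fin i → σ, C (p i fun j => Pi.single (r j) 1) * ∏ j, X (r j) := by
    unfold qp
    rw [← MvPolynomial.coeToMvPowerSeries.ringHom_apply, map_sum]
    refine Finset.sum_congr rfl fun r _ => ?_
    rw [map_mul, map_prod]
    simp
  rw [this]
  refine (nrm_sum_le _ _ _).trans ?_
  have h1 : ∀ r : Fin i → σ, nrm (fun _ => ρ) (C (p i fun j => Pi.single (r j) 1) * ∏ j, X (r j) : PS σ)
      ≤ ((‖p i‖₊ * ρ ^ i : ℝ≥0) : ℝ≥0∞) := by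
    intro r
    refine (nrm_mul_le _ _ _).trans ?_
    rw [nrm_C, ENNReal.coe_mul]
    gcongr
    · rw [enorm_eq_nnnorm, ENNReal.coe_le_coe]
      have := (p i).le_opNNNorm fun j => (Pi.single (r j) 1 : σ → ℝ)
      refine this.trans ?_
      refine (mul_le_mul_of_nonneg_left (Finset.prod_le_one (fun _ _ => zero_le) fun j _ => ?_) zero_le).trans (mul_one _).le
      rw [← NNReal.coe_le_coe, coe_nnnorm, NNReal.coe_one, pi_norm_le_iff_of_nonneg zero_le_one]
      intro s
      by_cases hs : s = r j
      · subst hs; simp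
      · simp [hs]
    · refine (nrm_prod_le _ _ _).trans ?_
      simp [nrm_X]
  refine (Finset.sum_le_sum fun r _ => h1 r).trans ?_
  rw [Finset.sum_const, Finset.card_univ, Fintype.card_fun, Fintype.card_fin, nsmul_eq_mul]
  rw [mul_pow]
  push_cast
  apply le_of_eq; ring

lemma R1 {u : (σ → ℝ) → ℝ} (hu : AnalyticAt ℝ u 0) : ∃ F : PS σ, Conv F ∧ Rep u F ∧ (F = 0 → u =ᶠ[𝓝 0] 0) := by
  obtain ⟨p, hp⟩ := hu
  refine ⟨FQ (qp p), ?_, ?_, ?_⟩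
  · obtain ⟨R, hR⟩ := hp
    obtain ⟨r, hr0, hr⟩ := ENNReal.lt_iff_exists_nnreal_btwn.1 (hR.r_pos.trans_le hR.r_le)
    have hr0 : 0 < r := by exact_mod_cast hr0
    obtain ⟨C, hC, hle⟩ := p.nnnorm_mul_pow_le_of_lt_radius hr
    set N : ℝ≥0 := Fintype.card σ + 1
    have hN : 0 < N := by positivity
    refine ⟨r / (2 * N), by positivity, ?_⟩
    refine (nrm_FQ _ _).trans_lt ?_
    have h1 : ∀ i, nrm (fun _ => r / (2 * N)) (qp p i : PS σ) ≤ (C : ℝ≥0∞) * (2⁻¹ : ℝ≥0∞) ^ i := by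
      intro i
      refine (qp_nrm p i _).trans ?_
      have : ((C * (2⁻¹ : ℝ≥0) ^ i : ℝ≥0) : ℝ≥0∞) = (C : ℝ≥0∞) * (2⁻¹ : ℝ≥0∞) ^ i := by
        push_cast
        simp
      rw [← this, ENNReal.coe_le_coe]
      calc (Fintype.card σ * (r / (2 * N))) ^ i * ‖p i‖₊ ≤ (N * (r / (2 * N))) ^ i * ‖p i‖₊ := by
            gcongr
            exact le_self_add
        _ = (‖p i‖₊ * r ^ i) * 2⁻¹ ^ i := by
            rw [show N * (r / (2 * N)) = r * 2⁻¹ by field_simp, mul_pow]; ring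
        _ ≤ _ := by gcongr; exact hle i
    refine (ENNReal.tsum_le_tsum h1).trans_lt ?_
    rw [ENNReal.tsum_mul_left, ENNReal.tsum_geometric]
    refine ENNReal.mul_lt_top ENNReal.coe_lt_top ?_
    simp
  · refine rep_FQ (qp_hom p) fun k => ?_
    have := hp.isBigO_sub_partialSum_pow k
    simpa [FormalMultilinearSeries.partialSum, qp_eval] using this
  · intro h0
    have hq : ∀ i, qp p i = 0 := by
      intro i
      ext e
      rw [MvPolynomial.coeff_zero]
      by_cases h : degree e = i
      · subst h
        rw [← coeff_FQ, h0]; simp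
      · exact hom_coeff (qp_hom p i) h
    filter_upwards [hp.eventually_hasSum] with x hx
    have h2 : ∀ i, p i (fun _ => x) = 0 := fun i => by rw [← qp_eval, hq]; simp
    simp only [h2, zero_add] at hx
    exact hx.unique hasSum_zero

lemma exists_mlm (i : ℕ) (e : σ →₀ ℕ) (h : degree e = i) : ∃ M : ContinuousMultilinearMap ℝ (fun _ : Fin i => σ → ℝ) ℝ,
    ‖M‖ ≤ 1 ∧ ∀ x : σ → ℝ, M (fun _ => x) = ∏ s, x s ^ e s := by
  classical
  set l := (Finsupp.toMultiset e).toList with hl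
  have hlen : l.length = i := by
    rw [hl, Multiset.length_toList, Finsupp.card_toMultiset, ← h]; rfl
  subst hlen
  refine ⟨(ContinuousMultilinearMap.mkPiAlgebra ℝ (Fin l.length) ℝ).compContinuousLinearMap
    (fun j => ContinuousLinearMap.proj (l.get j)), ?_, ?_⟩
  · refine ContinuousMultilinearMap.opNorm_le_bound zero_le_one fun m => ?_
    simp only [ContinuousMultilinearMap.compContinuousLinearMap_apply, ContinuousMultilinearMap.mkPiAlgebra_apply,
      ContinuousLinearMap.proj_apply, one_mul, norm_prod]
    exact Finset.prod_le_prod (fun _ _ => norm_nonneg _) fun j _ => norm_le_pi_norm _ _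
  · intro x
    simp only [ContinuousMultilinearMap.compContinuousLinearMap_apply, ContinuousMultilinearMap.mkPiAlgebra_apply,
      ContinuousLinearMap.proj_apply]
    have h1 : ∏ j : Fin l.length, x (l.get j) = (l.map x).prod := by
      rw [← List.prod_ofFn]
      congr 1
      apply List.ext_get <;> simp
    rw [h1, ← Multiset.prod_coe, ← Multiset.map_coe, hl, Multiset.coe_toList, Finsupp.toMultiset_map, Finsupp.prod_toMultiset,
      Finsupp.prod_mapDomain_index (by simp) (by intros; rw [pow_add]), Finsupp.prod_fintype _ _ (by simp)]

lemma exists_mlm' (i : ℕ) (e : σ →₀ ℕ) : ∃ M : ContinuousMultilinearMap ℝ (fun _ : Fin i => σ → ℝ) ℝ,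
    ‖M‖ ≤ 1 ∧ (degree e = i → ∀ x : σ → ℝ, M (fun _ => x) = ∏ s, x s ^ e s) := by
  by_cases h : degree e = i
  · obtain ⟨M, h1, h2⟩ := exists_mlm i e h
    exact ⟨M, h1, fun _ => h2⟩
  · exact ⟨0, by simp, fun h' => absurd h' h⟩

lemma R2 {F : PS σ} (hF : Conv F) : ∃ u : (σ → ℝ) → ℝ, AnalyticAt ℝ u 0 ∧ Rep u F := by
  classical
  obtain ⟨ρ, hρ, hn⟩ := hF
  choose M hM1 hM2 using exists_mlm' (σ := σ)
  set S : ℕ → Finset (σ →₀ ℕ) := fun i => Finset.univ.finsuppAntidiag i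
  have hS : ∀ i e, e ∈ S i ↔ degree e = i := by
    intro i e
    simp [S, Finset.mem_finsuppAntidiag, degree_eq_sum]
  set p : FormalMultilinearSeries ℝ (σ → ℝ) ℝ := fun i => ∑ e ∈ S i, coeff e F • M i e
  set q : ℕ → MvPolynomial σ ℝ := fun i => ∑ e ∈ S i, MvPolynomial.monomial e (coeff e F)
  have hq : ∀ i, (q i).IsHomogeneous i := fun i =>
    MvPolynomial.IsHomogeneous.sum _ _ _ fun e he => MvPolynomial.isHomogeneous_monomial _ ((hS i e).1 he)
  have hqF : FQ q = F := by
    ext e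
    rw [coeff_FQ]
    simp only [q, MvPolynomial.coeff_sum, MvPolynomial.coeff_monomial]
    rw [Finset.sum_ite_eq', if_pos ((hS _ _).2 rfl)]
  have hqe : ∀ i x, MvPolynomial.eval x (q i) = p i fun _ => x := by
    intro i x
    simp only [q, p, map_sum, MvPolynomial.eval_monomial, ContinuousMultilinearMap.sum_apply,
      ContinuousMultilinearMap.smul_apply, smul_eq_mul]
    refine Finset.sum_congr rfl fun e he => ?_
    rw [hM2 i e ((hS i e).1 he), Finsupp.prod_fintype _ _ (by simp)]
  have hr : (ρ : ℝ≥0∞) ≤ p.radius := by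
    refine p.le_radius_of_bound (nrm (fun _ => ρ) F).toReal fun i => ?_
    have h1 : ‖p i‖ ≤ ∑ e ∈ S i, ‖coeff e F‖ := by
      refine (norm_sum_le _ _).trans (Finset.sum_le_sum fun e _ => ?_)
      rw [norm_smul]
      exact mul_le_of_le_one_right (norm_nonneg _) (hM1 i e)
    have h2 : ∑ e ∈ S i, ‖coeff e F‖ₑ * mono (fun _ => ρ) e ≤ nrm (fun _ => ρ) F := ENNReal.sum_le_tsum _
    have h3 := ENNReal.toReal_mono hn.ne h2
    refine le_trans ?_ h3
    rw [ENNReal.toReal_sum (fun e _ => ENNReal.mul_ne_top (by simp) (mono_ne_top _ _))]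
    refine (mul_le_mul_of_nonneg_right h1 (by positivity)).trans ?_
    rw [Finset.sum_mul]
    refine Finset.sum_le_sum fun e he => ?_
    rw [ENNReal.toReal_mul, toReal_enorm]
    refine le_of_eq ?_
    congr 1
    rw [mono, ENNReal.coe_toReal, Finsupp.prod_fintype _ _ (by simp), Finset.prod_pow_eq_pow_sum, ← degree_eq_sum,
      (hS i e).1 he]
    simp
  have hp := p.hasFPowerSeriesOnBall (lt_of_lt_of_le (by exact_mod_cast hρ) hr)
  refine ⟨p.sum, hp.analyticAt, ?_⟩
  rw [← hqF]
  refine rep_FQ hq fun k => ?_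
  have := hp.hasFPowerSeriesAt.isBigO_sub_partialSum_pow k
  simpa [FormalMultilinearSeries.partialSum, hqe] using this

lemma R3 {u : (σ → ℝ) → ℝ} (hu : ContDiffAt ℝ (⊤ : ℕ∞) u 0) : ∃ F : PS σ, Rep u F := by
  set p : FormalMultilinearSeries ℝ (σ → ℝ) ℝ := fun i => ((i.factorial : ℝ)⁻¹) • iteratedFDeriv ℝ i u 0
  refine ⟨FQ (qp p), rep_FQ (qp_hom p) fun k => ?_⟩
  cases k with
  | zero => simpa using hu.continuousAt.tendsto.isBigO_one ℝ
  | succ n =>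
    have hn : ContDiffAt ℝ ((n + 1 : ℕ) : WithTop ℕ∞) u 0 := hu.of_le (by exact_mod_cast le_top)
    have h1 := hn.eventually (by simp)
    have h2 : ContinuousAt (iteratedFDeriv ℝ (n + 1) u) 0 := hn.continuousAt_iteratedFDeriv le_rfl
    have h3 := h2.norm.eventually (gt_mem_nhds (lt_add_one _))
    set C := ‖iteratedFDeriv ℝ (n + 1) u 0‖ + 1
    obtain ⟨ε, hε, hb⟩ := Metric.eventually_nhds_iff_ball.1 (h1.and h3)
    refine IsBigO.of_bound ((n.factorial : ℝ)⁻¹ * C) ?_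
    filter_upwards [Metric.ball_mem_nhds _ hε] with y hy
    have hty : ∀ t ∈ Set.Icc (0:ℝ) 1, (0 : σ → ℝ) + t • y ∈ Metric.ball (0 : σ → ℝ) ε := by
      intro t ht
      rw [zero_add, mem_ball_zero_iff, norm_smul, Real.norm_eq_abs, abs_of_nonneg ht.1]
      rw [mem_ball_zero_iff] at hy
      exact (mul_le_of_le_one_left (norm_nonneg _) ht.2).trans_lt hy
    have h4 := map_add_eq_sum_add_integral_iteratedFDeriv (f := u) (x := 0) (y := y) (n := n)
      (fun t ht => by exact_mod_cast (hb _ (hty t ht)).1)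
    rw [zero_add] at h4
    have h5 : u y - ∑ i ∈ Finset.range (n + 1), MvPolynomial.eval y (qp p i) =
        ((n.factorial : ℝ)⁻¹) • ∫ t in (0:ℝ)..1, (1-t)^n • iteratedFDeriv ℝ (n+1) u (0+t•y) (fun _=>y) := by
      rw [h4, sub_eq_iff_eq_add, add_comm]
      congr 1
      refine Finset.sum_congr rfl fun i _ => ?_
      rw [qp_eval]
      rfl
    rw [h5, norm_smul, norm_pow, norm_norm, mul_assoc]
    gcongr
    · simp
    · have := intervalIntegral.norm_integral_le_of_norm_le_const (a := 0) (b := 1) (C := C * ‖y‖ ^ (n+1))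
        (f := fun t : ℝ => (1-t)^n • iteratedFDeriv ℝ (n+1) u (0+t•y) (fun _=>y)) (fun t ht => by
          rw [Set.uIoc_of_le zero_le_one] at ht
          have ht' : t ∈ Set.Icc (0:ℝ) 1 := ⟨ht.1.le, ht.2⟩
          rw [norm_smul, norm_pow]
          have h6 : ‖1 - t‖ ^ n ≤ 1 := by
            refine pow_le_one₀ (norm_nonneg _) ?_
            rw [Real.norm_eq_abs, abs_le]
            constructor <;> linarith [ht.1, ht.2]
          have h7 := (iteratedFDeriv ℝ (n+1) u (0+t•y)).le_opNorm fun _ => y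
          rw [Finset.prod_const, Finset.card_univ, Fintype.card_fin] at h7
          have h8 := (hb _ (hty t ht')).2.le
          refine (mul_le_of_le_one_left (norm_nonneg _) h6).trans (h7.trans ?_)
          gcongr)
      simpa using this

end
end ART


namespace ART
open MvPowerSeries Finsupp
open scoped ENNReal NNReal Topology

section
open Asymptotics Filter

lemma deriv_transfer {n : ℕ} {u v : Fin n → (Fin n → ℝ) → ℝ} {F G : Fin n → PS (Fin n)} (hu : ∀ i, Rep (u i) (F i)) (hv : ∀ i, Rep (v i) (G i))
    (hFG : ∀ i, G i - F i ∈ M1 2) {L : (Fin n → ℝ) →L[ℝ] (Fin n → ℝ)} (hL : HasFDerivAt (fun x i => u i x) L 0) :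
    HasFDerivAt (fun x i => v i x) L 0 := by
  have h1 : (fun x i => v i x - u i x) =O[𝓝 0] fun x : Fin n → ℝ => ‖x - 0‖ ^ 2 := by
    rw [isBigO_pi]
    intro i
    have := ((hv i).sub (hu i)).poly (k := 2) (p := 0) (by simpa using hFG i)
    simpa using this
  have h2 := (h1.hasFDerivAt (by norm_num)).add hL
  rw [zero_add] at h2
  refine h2.congr_of_eventuallyEq (Eventually.of_forall fun x => ?_)
  funext i
  simp

lemma final {n m : ℕ} {f g : (Fin n → ℝ) → (Fin m → ℝ)} (hf : AnalyticAt ℝ f 0) (hg : AnalyticAt ℝ g 0)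
    {τ : (Fin n → ℝ) → (Fin n → ℝ)} (hτ : ContDiffAt ℝ (⊤ : ℕ∞) τ 0) (hτ0 : τ 0 = 0)
    {Dτ : (Fin n → ℝ) ≃L[ℝ] (Fin n → ℝ)} (hD : HasFDerivAt τ (Dτ : (Fin n → ℝ) →L[ℝ] (Fin n → ℝ)) 0)
    (hfg : ∀ᶠ x : Fin n → ℝ in 𝓝 0, f (τ x) = g x) :
    ∃ σ : (Fin n → ℝ) → (Fin n → ℝ),
      AnalyticAt ℝ σ 0 ∧ σ 0 = 0 ∧
      (∃ Dσ : (Fin n → ℝ) ≃L[ℝ] (Fin n → ℝ),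
        HasFDerivAt σ (Dσ : (Fin n → ℝ) →L[ℝ] (Fin n → ℝ)) 0) ∧
      ∀ᶠ x : Fin n → ℝ in 𝓝 0, f (σ x) = g x := by
  have hfk : ∀ k, AnalyticAt ℝ (fun x => f x k) 0 := fun k => analyticAt_pi_iff.1 hf k
  have hgk : ∀ k, AnalyticAt ℝ (fun x => g x k) 0 := fun k => analyticAt_pi_iff.1 hg k
  choose F Fc Fr _ using fun k => R1 (hfk k)
  choose G Gc Gr _ using fun k => R1 (hgk k)
  choose T Tr using fun i => R3 (contDiffAt_pi.1 hτ i)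
  have T0 : ∀ i, constantCoeff (T i) = 0 := fun i => by
    rw [← (Tr i).const, hτ0]; rfl
  set H : Fin m → PS (Fin n ⊕ Fin n) := fun k =>
    subst (fun i => (X (Sum.inl i) : PS (Fin n ⊕ Fin n))) (F k) - subst (fun i => (X (Sum.inr i) : PS (Fin n ⊕ Fin n))) (G k)
  have Hc : ∀ k, Conv (H k) := fun k =>
    (Conv.subst (fun _ => constantCoeff_X _) (fun _ => Conv.X _) (Fc k)).sub
      (Conv.subst (fun _ => constantCoeff_X _) (fun _ => Conv.X _) (Gc k))
  have Hr : ∀ k, Rep (fun z : Fin n ⊕ Fin n → ℝ => f (fun i => z (Sum.inl i)) k - g (fun i => z (Sum.inr i)) k) (H k) := fun k =>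
    ((Fr k).comp (fun i => Rep.X (Sum.inl i)) (fun _ => constantCoeff_X _)).sub
      ((Gr k).comp (fun i => Rep.X (Sum.inr i)) (fun _ => constantCoeff_X _))
  set y : Fin n ⊕ Fin n → PS (Fin n) := Sum.elim T X with hy
  have y0 : ∀ k, constantCoeff (y k) = 0 := by
    rintro (i | i)
    · exact T0 i
    · exact constantCoeff_X _
  have yr : ∀ k, Rep (fun x : Fin n → ℝ => Sum.elim (τ x) x k) (y k) := by
    rintro (i | i)
    · exact Tr i
    · exact Rep.X i
  have Hy : ∀ k, subst y (H k) = 0 := by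
    intro k
    refine ((Hr k).comp yr y0).unique Rep.zero ?_
    filter_upwards [hfg] with x hx
    simp [hx]
  obtain ⟨y1, yc, y10, yy, hsub⟩ := good_all (Fin n) (Fin n ⊕ Fin n) y y0 2
  choose v va vr using fun k => R2 (yc k)
  have v0 : ∀ k, v k 0 = 0 := fun k => by rw [(vr k).const, y10]
  set Y : (Fin n → ℝ) → (Fin n → ℝ) := fun x i => v (Sum.inl i) x with hY
  set Z : (Fin n → ℝ) → (Fin n → ℝ) := fun x i => v (Sum.inr i) x with hZ
  have Ya : AnalyticAt ℝ Y 0 := analyticAt_pi_iff.2 fun i => va _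
  have Za : AnalyticAt ℝ Z 0 := analyticAt_pi_iff.2 fun i => va _
  have Y0 : Y 0 = 0 := funext fun i => v0 _
  have Z0 : Z 0 = 0 := funext fun i => v0 _
  have YD : HasFDerivAt Y (Dτ : (Fin n → ℝ) →L[ℝ] (Fin n → ℝ)) 0 :=
    deriv_transfer (fun i => yr (Sum.inl i)) (fun i => vr (Sum.inl i)) (fun i => yy _) hD
  have ZD : HasFDerivAt Z ((ContinuousLinearEquiv.refl ℝ (Fin n → ℝ) : (Fin n → ℝ) ≃L[ℝ] (Fin n → ℝ)) : (Fin n → ℝ) →L[ℝ] (Fin n → ℝ)) 0 :=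
    deriv_transfer (fun i => yr (Sum.inr i)) (fun i => vr (Sum.inr i)) (fun i => yy _) (hasFDerivAt_id _)
  have hYZ : ∀ᶠ x in 𝓝 0, f (Y x) = g (Z x) := by
    have : ∀ k, ∀ᶠ x in 𝓝 0, f (Y x) k = g (Z x) k := by
      intro k
      have ha : AnalyticAt ℝ (fun x => f (Y x) k - g (Z x) k) 0 := by
        refine AnalyticAt.sub ?_ ?_
        · exact AnalyticAt.comp' (g := fun x => f x k) (f := Y) (by rw [Y0]; exact hfk k) Ya
        · exact AnalyticAt.comp' (g := fun x => g x k) (f := Z) (by rw [Z0]; exact hgk k) Za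
      obtain ⟨E, _, Er, E0⟩ := R1 ha
      have h1 := (Hr k).comp vr y10
      rw [hsub _ (Hc k) (Hy k)] at h1
      have h2 := E0 (Er.unique h1 EventuallyEq.rfl)
      filter_upwards [h2] with x hx
      exact sub_eq_zero.1 hx
    filter_upwards [eventually_all.2 this] with x hx
    exact funext hx
  have Zs : HasStrictFDerivAt Z ((ContinuousLinearEquiv.refl ℝ (Fin n → ℝ) : (Fin n → ℝ) ≃L[ℝ] (Fin n → ℝ)) : (Fin n → ℝ) →L[ℝ] (Fin n → ℝ)) 0 := by
    have := Za.hasStrictFDerivAt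
    rwa [ZD.fderiv] at this
  set W := Zs.localInverse Z _ 0 with hW
  have W0 : W 0 = 0 := by
    have := Zs.localInverse_apply_image
    rwa [Z0] at this
  have Wa : AnalyticAt ℝ W 0 := by
    have := (Zs.toOpenPartialHomeomorph Z).analyticAt_symm' Zs.mem_toOpenPartialHomeomorph_source
      (by rw [Zs.toOpenPartialHomeomorph_coe]; exact Za) (by rw [Zs.toOpenPartialHomeomorph_coe]; exact ZD.fderiv)
    rw [Zs.toOpenPartialHomeomorph_coe, Z0] at this
    exact this
  have WD : HasFDerivAt W ((ContinuousLinearEquiv.refl ℝ (Fin n → ℝ)).symm : (Fin n → ℝ) →L[ℝ] (Fin n → ℝ)) 0 := by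
    have := Zs.to_localInverse.hasFDerivAt
    rwa [Z0] at this
  have Wr : ∀ᶠ x in 𝓝 0, Z (W x) = x := by
    have := Zs.eventually_right_inverse
    rwa [Z0] at this
  refine ⟨fun x => Y (W x), AnalyticAt.comp' (by rw [W0]; exact Ya) Wa, by simp only [W0, Y0], ⟨Dτ, ?_⟩, ?_⟩
  · have := HasFDerivAt.comp (g := Y) (f := W) (0 : Fin n → ℝ) (by rw [W0]; exact YD) WD
    convert this using 1
    all_goals first | rfl | (ext; rfl) | (ext; simp)
  · have hc : Tendsto W (𝓝 0) (𝓝 0) := by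
      have := Wa.continuousAt.tendsto
      rwa [W0] at this
    filter_upwards [hc.eventually hYZ, Wr] with x h1 h2
    rw [h1, h2]

end
end ART

/-- Two $C^\infty$ R equivalent real analytic map germs are analytically R equivalent. -/
theorem smooth_R_equiv_implies_analytic_R_equiv {n m : ℕ}
    {f g : (Fin n → ℝ) → (Fin m → ℝ)}
    (hf : AnalyticAt ℝ f 0) (hf0 : f 0 = 0)
    (hg : AnalyticAt ℝ g 0) (hg0 : g 0 = 0)
    (hsmooth : ∃ τ : (Fin n → ℝ) → (Fin n → ℝ),
      ContDiffAt ℝ (⊤ : ℕ∞) τ 0 ∧ τ 0 = 0 ∧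
      (∃ Dτ : (Fin n → ℝ) ≃L[ℝ] (Fin n → ℝ),
        HasFDerivAt τ (Dτ : (Fin n → ℝ) →L[ℝ] (Fin n → ℝ)) 0) ∧
      ∀ᶠ x : Fin n → ℝ in 𝓝 0, f (τ x) = g x) :
    ∃ σ : (Fin n → ℝ) → (Fin n → ℝ),
      AnalyticAt ℝ σ 0 ∧ σ 0 = 0 ∧
      (∃ Dσ : (Fin n → ℝ) ≃L[ℝ] (Fin n → ℝ),
        HasFDerivAt σ (Dσ : (Fin n → ℝ) →L[ℝ] (Fin n → ℝ)) 0) ∧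
      ∀ᶠ x : Fin n → ℝ in 𝓝 0, f (σ x) = g x := by
  obtain ⟨τ, h1, h2, ⟨Dτ, h3⟩, h4⟩ := hsmooth
  exact ART.final hf hg h1 h2 h3 h4
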